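/- Let G be a planar simple graph of girth at least seven and maximum degree Δ(G) ≥ 190 + 2k, for some integer k ≥ 1. Then λ_{k,1}(G) ≤ Δ(G) + 2k − 1. -/

import Mathlib

open SimpleGraph

/-- A drawing of a simple graph in the plane: vertices are mapped to distinct points,
edges to arcs (injective continuous curves parametrised on `[0,1]`) joining the images of
their endpoints, whose interiors avoid the vertex points and each other. -/
structure PlaneEmbedding {V : Type*} (G : SimpleGraph V) where
  pos : V → ℝ × ℝ
  inj : Function.Injective pos
  arc : G.edgeSet → ℝ → ℝ × ℝ
  arc_cont : ∀ e, ContinuousOn (arc e) (Set.Icc 0 1)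
  arc_inj : ∀ e, Set.InjOn (arc e) (Set.Icc 0 1)
  arc_ends : ∀ e : G.edgeSet, ∃ u v : V, (e : Sym2 V) = s(u, v) ∧
      arc e 0 = pos u ∧ arc e 1 = pos v
  arc_avoid : ∀ e : G.edgeSet, ∀ t ∈ Set.Ioo (0:ℝ) 1, arc e t ∉ Set.range pos
  arc_disjoint : ∀ e f : G.edgeSet, e ≠ f → ∀ s ∈ Set.Ioo (0:ℝ) 1, ∀ t ∈ Set.Ioo (0:ℝ) 1,
      arc e s ≠ arc f t

/-- A graph is planar if it admits a drawing in the plane. -/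
def SimpleGraph.IsPlanar {V : Type*} (G : SimpleGraph V) : Prop :=
  Nonempty (PlaneEmbedding G)

/-- An `L(p,q)`-labelling: labels of adjacent vertices differ by at least `p`, and labels
of vertices at distance exactly two differ by at least `q`. -/
def SimpleGraph.IsLpqLabelling {V : Type*} (G : SimpleGraph V) (p q : ℕ) (f : V → ℤ) : Prop :=
  (∀ u v, G.Adj u v → (p : ℤ) ≤ |f u - f v|) ∧
  (∀ u v, u ≠ v → ¬ G.Adj u v → (∃ w, G.Adj u w ∧ G.Adj w v) → (q : ℤ) ≤ |f u - f v|)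

/-- `λ_{p,q}(G)`: the least `t` such that `G` has an `L(p,q)`-labelling with labels
in `{1, …, t}`. -/
noncomputable def SimpleGraph.lambdaNumber {V : Type*} (G : SimpleGraph V) (p q : ℕ) : ℕ :=
  sInf {t : ℕ | ∃ f : V → ℤ, G.IsLpqLabelling p q f ∧ ∀ v, f v ∈ Finset.Icc (1 : ℤ) (t : ℤ)}

/-- `φ` has a continuous logarithm on `K`. -/
def HasLogOn {X : Type*} [TopologicalSpace X] (K : Set X) (φ : X → ℂ) : Prop :=
  ∃ g : X → ℂ, ContinuousOn g K ∧ ∀ z ∈ K, φ z = Complex.exp (g z)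

namespace HasLogOn

variable {X : Type*} [TopologicalSpace X] {K L : Set X} {φ ψ : X → ℂ}

theorem mono (h : HasLogOn K φ) (hL : L ⊆ K) : HasLogOn L φ := by
  obtain ⟨g, hg, he⟩ := h
  exact ⟨g, hg.mono hL, fun z hz => he z (hL hz)⟩

theorem congr (h : HasLogOn K φ) (hφ : ∀ z ∈ K, ψ z = φ z) : HasLogOn K ψ := by
  obtain ⟨g, hg, he⟩ := h
  exact ⟨g, hg, fun z hz => (hφ z hz).trans (he z hz)⟩

theorem mul (h : HasLogOn K φ) (h' : HasLogOn K ψ) : HasLogOn K (fun z => φ z * ψ z) := by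
  obtain ⟨g, hg, he⟩ := h
  obtain ⟨g', hg', he'⟩ := h'
  exact ⟨fun z => g z + g' z, hg.add hg', fun z hz => by
    simp only [he z hz, he' z hz, Complex.exp_add]⟩

theorem inv (h : HasLogOn K φ) : HasLogOn K (fun z => (φ z)⁻¹) := by
  obtain ⟨g, hg, he⟩ := h
  exact ⟨fun z => -g z, hg.neg, fun z hz => by simp only [he z hz, Complex.exp_neg]⟩

theorem div (h : HasLogOn K φ) (h' : HasLogOn K ψ) : HasLogOn K (fun z => φ z / ψ z) := by
  simpa only [div_eq_mul_inv] using h.mul h'.inv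

theorem zpow (h : HasLogOn K φ) (n : ℤ) : HasLogOn K (fun z => φ z ^ n) := by
  obtain ⟨g, hg, he⟩ := h
  exact ⟨fun z => n * g z, continuousOn_const.mul hg, fun z hz => by
    simp only [he z hz, Complex.exp_int_mul]⟩

theorem const (K : Set X) {c : ℂ} (hc : c ≠ 0) : HasLogOn K (fun _ => c) :=
  ⟨fun _ => Complex.log c, continuousOn_const, fun _ _ => (Complex.exp_log hc).symm⟩

theorem prod {ι : Type*} (s : Finset ι) {φ : ι → X → ℂ} (h : ∀ i ∈ s, HasLogOn K (φ i)) :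
    HasLogOn K (fun z => ∏ i ∈ s, φ i z) := by
  classical
  induction s using Finset.induction_on with
  | empty => simpa using const K one_ne_zero
  | insert i s hi ih =>
    simp only [Finset.prod_insert hi]
    exact (h i (by simp)).mul (ih fun j hj => h j (by simp [hj]))

/-- A function taking values in the slit plane has a logarithm. -/
theorem of_slitPlane (hφ : ContinuousOn φ K) (h : ∀ z ∈ K, φ z ∈ Complex.slitPlane) :
    HasLogOn K φ :=
  ⟨fun z => Complex.log (φ z), hφ.clog h,
    fun z hz => (Complex.exp_log (Complex.slitPlane_ne_zero (h z hz))).symm⟩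

/-- A function close to `1` has a logarithm. -/
theorem of_norm_sub_one_lt (hφ : ContinuousOn φ K) (h : ∀ z ∈ K, ‖φ z - 1‖ < 1) :
    HasLogOn K φ := by
  refine of_slitPlane hφ fun z hz => Complex.mem_slitPlane_iff.2 (Or.inl ?_)
  have h1 := (Complex.abs_re_le_norm (φ z - 1)).trans_lt (h z hz)
  rw [abs_lt] at h1
  simp at h1
  linarith [h1.1]

/-- A nowhere vanishing continuous function on a simply connected space has a logarithm. -/
theorem univ_of_simplyConnected [SimplyConnectedSpace X] [LocallyPathConnectedSpace X]
    (hφ : Continuous φ) (h0 : ∀ z, φ z ≠ 0) : HasLogOn Set.univ φ := by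
  obtain ⟨x₀⟩ : Nonempty X := inferInstance
  obtain ⟨f, ⟨-, hf⟩, -⟩ := Complex.isCoveringMapOn_exp.existsUnique_continuousMap_lifts
    (⟨φ, hφ⟩ : C(X, ℂ)) (a₀ := x₀) (e₀ := Complex.log (φ x₀)) (Complex.exp_log (h0 x₀))
    (fun x => by simpa using h0 x)
  exact ⟨f, f.continuous.continuousOn, fun z _ => (congrFun hf z).symm⟩

/-- A nowhere vanishing continuous function on the unit interval has a logarithm. -/
theorem unitInterval {φ : ℝ → ℂ} (hφ : ContinuousOn φ (Set.Icc 0 1))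
    (h0 : ∀ t ∈ Set.Icc (0 : ℝ) 1, φ t ≠ 0) : HasLogOn (Set.Icc 0 1) φ := by
  have h01 : (0 : ℝ) ≤ 1 := zero_le_one
  have hc : Continuous (Set.IccExtend h01 ((Set.Icc 0 1).domRestrict φ)) :=
    (continuousOn_iff_continuous_domRestrict.1 hφ).Icc_extend'
  have := univ_of_simplyConnected hc fun t => h0 _ (Set.projIcc 0 1 h01 t).2
  refine (this.mono (Set.subset_univ _)).congr fun t ht => ?_
  rw [Set.IccExtend_of_mem _ _ ht]
  rfl

end HasLogOn

/-- The inverse of an arc is continuous. -/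
theorem exists_continuousOn_arc_inverse {γ : ℝ → ℂ} (hγ : ContinuousOn γ (Set.Icc 0 1))
    (hinj : Set.InjOn γ (Set.Icc 0 1)) :
    ∃ τ : ℂ → ℝ, ContinuousOn τ (γ '' Set.Icc 0 1) ∧ ∀ t ∈ Set.Icc (0 : ℝ) 1, τ (γ t) = t := by
  have hleft : ∀ t ∈ Set.Icc (0 : ℝ) 1, Function.invFunOn γ (Set.Icc 0 1) (γ t) = t :=
    fun t ht => hinj.leftInvOn_invFunOn ht
  refine ⟨Function.invFunOn γ (Set.Icc 0 1), ?_, hleft⟩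
  rw [continuousOn_iff_isClosed]
  intro C hC
  refine ⟨γ '' (Set.Icc 0 1 ∩ C), ?_, ?_⟩
  · exact ((isCompact_Icc.inter_right hC).image_of_continuousOn
      (hγ.mono Set.inter_subset_left)).isClosed
  · ext z
    constructor
    · rintro ⟨hz, t, ht, rfl⟩
      refine ⟨⟨t, ⟨ht, ?_⟩, rfl⟩, t, ht, rfl⟩
      simpa [hleft t ht] using hz
    · rintro ⟨⟨t, ⟨ht, htC⟩, rfl⟩, -⟩
      exact ⟨by simpa [hleft t ht] using htC, t, ht, rfl⟩

/-- A nowhere vanishing continuous function on an arc has a logarithm. -/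
theorem HasLogOn.arc {γ : ℝ → ℂ} (hγ : ContinuousOn γ (Set.Icc 0 1))
    (hinj : Set.InjOn γ (Set.Icc 0 1)) {φ : ℂ → ℂ} (hφ : ContinuousOn φ (γ '' Set.Icc 0 1))
    (h0 : ∀ z ∈ γ '' Set.Icc 0 1, φ z ≠ 0) : HasLogOn (γ '' Set.Icc 0 1) φ := by
  obtain ⟨τ, hτ, hl⟩ := exists_continuousOn_arc_inverse hγ hinj
  obtain ⟨g, hg, he⟩ := HasLogOn.unitInterval (φ := fun t => φ (γ t))
    (hφ.comp hγ (Set.mapsTo_image _ _)) (fun t ht => h0 _ ⟨t, ht, rfl⟩)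
  refine ⟨fun z => g (τ z), hg.comp hτ ?_, ?_⟩
  · rintro _ ⟨t, ht, rfl⟩
    rwa [hl t ht]
  · rintro _ ⟨t, ht, rfl⟩
    simpa only [hl t ht] using he t ht

/-- Two logarithms of the same function differ by a continuous integer multiple of `2πi`. -/
theorem exists_int_discrepancy {X : Type*} [TopologicalSpace X] {K : Set X}
    {g h : X → ℂ} (hg : ContinuousOn g K) (hh : ContinuousOn h K)
    (he : ∀ z ∈ K, Complex.exp (g z) = Complex.exp (h z)) :
    ∃ m : X → ℤ, ContinuousOn m K ∧ ∀ z ∈ K, g z = h z + m z * (2 * Real.pi * Complex.I) := by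
  have hmult : ∀ z : X, ∃ n : ℤ, z ∈ K → g z = h z + n * (2 * Real.pi * Complex.I) := by
    intro z
    by_cases hz : z ∈ K
    · obtain ⟨n, hn⟩ := Complex.exp_eq_exp_iff_exists_int.1 (he z hz)
      exact ⟨n, fun _ => hn⟩
    · exact ⟨0, fun h => absurd h hz⟩
  choose m hm using hmult
  refine ⟨m, ?_, hm⟩
  rw [Int.isClosedEmbedding_coe_real.isInducing.continuousOn_iff]
  have hc : ContinuousOn (fun z => ((g z - h z) / (2 * Real.pi * Complex.I)).re) K :=
    Complex.continuous_re.comp_continuousOn ((hg.sub hh).div_const _)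
  refine hc.congr fun z hz => ?_
  have : (g z - h z) / (2 * Real.pi * Complex.I) = m z := by
    rw [hm z hz, add_sub_cancel_left, mul_div_assoc, div_self Complex.two_pi_I_ne_zero, mul_one]
  simp [this]

/-- Two logarithms of the same function differ by a constant on a preconnected set. -/
theorem exp_eq_exp_sub_const {X : Type*} [TopologicalSpace X] {K : Set X} (hK : IsPreconnected K)
    {g h : X → ℂ} (hg : ContinuousOn g K) (hh : ContinuousOn h K)
    (he : ∀ z ∈ K, Complex.exp (g z) = Complex.exp (h z)) {x y : X} (hx : x ∈ K) (hy : y ∈ K) :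
    g x - h x = g y - h y := by
  obtain ⟨m, hm, hgm⟩ := exists_int_discrepancy hg hh he
  rw [hgm x hx, hgm y hy, hK.constant hm hx hy]
  ring

theorem isPreconnected_norm_gt {R : ℝ} (hR : 0 < R) : IsPreconnected {z : ℂ | R < ‖z‖} := by
  have h : {z : ℂ | R < ‖z‖} = Complex.exp '' {w : ℂ | Real.log R < w.re} := by
    ext z
    constructor
    · intro hz
      have h0 : z ≠ 0 := fun h => by
        subst h
        simp at hz
        linarith
      exact ⟨Complex.log z, by
        simpa [Complex.log_re] using Real.log_lt_log hR hz, Complex.exp_log h0⟩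
    · rintro ⟨w, hw, rfl⟩
      simpa [Complex.norm_exp] using (Real.log_lt_iff_lt_exp hR).1 hw
  rw [h]
  exact (convex_halfSpace_re_gt _).isPreconnected.image _ Complex.continuous_exp.continuousOn

theorem isOpen_component {K : Set ℂ} (hK : IsCompact K) (a : ℂ) :
    IsOpen (connectedComponentIn Kᶜ a) :=
  hK.isClosed.isOpen_compl.connectedComponentIn

theorem mem_component_comm {K : Set ℂ} {a b : ℂ} (h : b ∈ connectedComponentIn Kᶜ a) :
    a ∈ connectedComponentIn Kᶜ b := by
  have ha : a ∈ Kᶜ := connectedComponentIn_nonempty_iff.1 ⟨b, h⟩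
  rw [← connectedComponentIn_eq h]
  exact mem_connectedComponentIn ha

theorem closure_component_subset {K : Set ℂ} (hK : IsCompact K) (a : ℂ) :
    closure (connectedComponentIn Kᶜ a) ⊆ connectedComponentIn Kᶜ a ∪ K := by
  intro x hx
  by_cases hxK : x ∈ K
  · exact Or.inr hxK
  · left
    obtain ⟨y, hy1, hy2⟩ := mem_closure_iff.1 hx _ (isOpen_component hK x)
      (mem_connectedComponentIn hxK)
    rw [connectedComponentIn_eq hy2, ← connectedComponentIn_eq hy1]
    exact mem_connectedComponentIn hxK

/-- At most one component of the complement of a compact set is unbounded. -/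
theorem bounded_component_or {K : Set ℂ} (hK : IsCompact K) {a b : ℂ}
    (hab : b ∉ connectedComponentIn Kᶜ a) (hb : b ∉ K) :
    Bornology.IsBounded (connectedComponentIn Kᶜ a) ∨
      Bornology.IsBounded (connectedComponentIn Kᶜ b) := by
  obtain ⟨R, hR, hKR⟩ := hK.isBounded.exists_pos_norm_le
  by_contra! hcon
  have key : ∀ c : ℂ, ¬ Bornology.IsBounded (connectedComponentIn Kᶜ c) →
      {z : ℂ | R < ‖z‖} ⊆ connectedComponentIn Kᶜ c := by
    intro c hc
    have : ∃ z ∈ connectedComponentIn Kᶜ c, R < ‖z‖ := by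
      by_contra! h
      exact hc (isBounded_iff_forall_norm_le.2 ⟨R, h⟩)
    obtain ⟨z, hz, hzR⟩ := this
    rw [connectedComponentIn_eq hz]
    refine (isPreconnected_norm_gt hR).subset_connectedComponentIn hzR ?_
    intro w hw hwK
    exact absurd (hKR w hwK) (not_le.2 hw)
  have hz : ((R + 1 : ℝ) : ℂ) ∈ {z : ℂ | R < ‖z‖} := by
    simp only [Set.mem_ofPred_eq, Complex.norm_real, Real.norm_eq_abs]
    exact (lt_add_one R).trans_le (le_abs_self _)
  have h1 := connectedComponentIn_eq (key a hcon.1 hz)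
  have h2 := connectedComponentIn_eq (key b hcon.2 hz)
  exact hab (by rw [h1, ← h2]; exact mem_connectedComponentIn hb)

/-- Points in the same component give a quotient with a logarithm. -/
theorem HasLogOn.of_mem_component {K : Set ℂ} (hK : IsCompact K) {a b : ℂ}
    (hab : b ∈ connectedComponentIn Kᶜ a) : HasLogOn K fun z => (z - a) / (z - b) := by
  have ha : a ∈ Kᶜ := connectedComponentIn_nonempty_iff.1 ⟨b, hab⟩
  have hsub := connectedComponentIn_subset Kᶜ a
  refine (isPreconnected_connectedComponentIn (x := a) (F := Kᶜ)).induction₂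
    (fun x y => HasLogOn K fun z => (z - x) / (z - y)) ?_ ?_ ?_ (mem_connectedComponentIn ha) hab
  · intro x hx
    obtain ⟨ε, hε, hball⟩ := Metric.isOpen_iff.1 hK.isClosed.isOpen_compl x (hsub hx)
    refine Filter.Eventually.filter_mono nhdsWithin_le_nhds ?_
    filter_upwards [Metric.ball_mem_nhds x (half_pos hε)] with y hy
    have hyK : ∀ z ∈ K, ε / 2 < ‖z - y‖ := by
      intro z hz
      have h1 : ε ≤ dist z x := by
        by_contra! h
        exact hball (Metric.mem_ball.2 h) hz
      have h2 := dist_triangle z y x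
      rw [Metric.mem_ball] at hy
      rw [← dist_eq_norm]
      linarith
    have hne : ∀ z ∈ K, z - y ≠ 0 := fun z hz h => by
      have := hyK z hz
      rw [h, norm_zero] at this
      linarith
    refine HasLogOn.of_norm_sub_one_lt ?_ ?_
    · exact (continuousOn_id.sub continuousOn_const).div
        (continuousOn_id.sub continuousOn_const) hne
    · intro z hz
      have : (z - x) / (z - y) - 1 = (y - x) / (z - y) := by
        field_simp [hne z hz]
        ring
      rw [this, norm_div, div_lt_one (norm_pos_iff.2 (hne z hz)), ← dist_eq_norm]
      exact (Metric.mem_ball.1 hy).trans (hyK z hz)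
  · intro x y z hx hy hz h1 h2
    refine (h1.mul h2).congr fun w hw => ?_
    have : w - y ≠ 0 := sub_ne_zero.2 fun h => hsub hy (h ▸ hw)
    field_simp
  · intro x y hx hy h
    exact h.inv.congr fun w hw => by simp

/-- A power of `z - a` has no logarithm on a circle about `a`. -/
theorem not_hasLogOn_sphere {a : ℂ} {R : ℝ} (hR : 0 < R) {n : ℤ} (hn : n ≠ 0) :
    ¬ HasLogOn (Metric.sphere a R) fun z => (z - a) ^ n := by
  rintro ⟨g, hg, he⟩
  have hmaps : ∀ t : ℝ, a + R * Complex.exp (t * Complex.I) ∈ Metric.sphere a R := by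
    intro t
    simp [Complex.norm_exp_ofReal_mul_I, abs_of_pos hR]
  have hc : Continuous fun t : ℝ => a + R * Complex.exp (t * Complex.I) := by fun_prop
  have h := exp_eq_exp_sub_const (K := (Set.univ : Set ℝ)) isPreconnected_univ
    (g := fun t : ℝ => g (a + R * Complex.exp (t * Complex.I)))
    (h := fun t : ℝ => n * (Real.log R + t * Complex.I))
    (hg.comp hc.continuousOn fun t _ => hmaps t) (by fun_prop)
    (fun t _ => by
      rw [← he _ (hmaps t), Complex.exp_int_mul, Complex.exp_add, ← Complex.ofReal_exp,
        Real.exp_log hR]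
      simp only [add_sub_cancel_left])
    (Set.mem_univ 0) (Set.mem_univ (2 * Real.pi))
  simp only [Complex.ofReal_mul, Complex.ofReal_ofNat, Complex.exp_two_pi_mul_I,
    Complex.ofReal_zero, zero_mul, Complex.exp_zero] at h
  have h2 : (n : ℂ) * (2 * Real.pi * Complex.I) = 0 := by linear_combination h
  rw [mul_eq_zero] at h2
  rcases h2 with h2 | h2
  · exact hn (by exact_mod_cast h2)
  · exact Complex.two_pi_I_ne_zero h2

/-- Borsuk's criterion: a function with a zero or a pole in a bounded component of the complement
of `K` has no logarithm on `K`. -/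
theorem not_hasLogOn_of_bounded {K : Set ℂ} (hK : IsCompact K) {a : ℂ} (ha : a ∉ K)
    (hb : Bornology.IsBounded (connectedComponentIn Kᶜ a)) {n : ℤ} (hn : n ≠ 0) {ψ : ℂ → ℂ}
    (hψ : ContinuousOn ψ (connectedComponentIn Kᶜ a ∪ K))
    (h0 : ∀ z ∈ connectedComponentIn Kᶜ a ∪ K, ψ z ≠ 0) :
    ¬ HasLogOn K fun z => (z - a) ^ n * ψ z := by
  classical
  rintro ⟨g, hg, he⟩
  set U := connectedComponentIn Kᶜ a with hU
  have hUo : IsOpen U := isOpen_component hK a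
  have haU : a ∈ U := mem_connectedComponentIn ha
  have hcl : closure U ⊆ U ∪ K := closure_component_subset hK a
  obtain ⟨G, hG⟩ := ContinuousMap.exists_restrict_eq hK.isClosed
    (⟨K.domRestrict g, continuousOn_iff_continuous_domRestrict.1 hg⟩ : C(K, ℂ))
  have hGK : ∀ z ∈ K, G z = g z := fun z hz => congrArg (fun f : C(K, ℂ) => f ⟨z, hz⟩) hG
  set S : ℂ → ℂ := fun z => if z ∈ closure U then Complex.exp (G z) / ψ z else (z - a) ^ n with hS
  have hzpow : ContinuousOn (fun z : ℂ => (z - a) ^ n) Uᶜ :=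
    (continuousOn_id.sub continuousOn_const).zpow₀ n fun z hz =>
      Or.inl (sub_ne_zero.2 fun h : z = a => hz (h ▸ haU))
  have hSU : ∀ z ∈ Uᶜ, S z = (z - a) ^ n := by
    intro z hz
    by_cases hzc : z ∈ closure U
    · have hzK : z ∈ K := (hcl hzc).resolve_left hz
      simp only [hS, if_pos hzc, hGK z hzK, ← he z hzK]
      rw [mul_div_assoc, div_self (h0 z (hcl hzc)), mul_one]
    · simp [hS, hzc]
  have hScl : ∀ z ∈ closure U, S z = Complex.exp (G z) / ψ z := fun z hz => if_pos hz
  have hScont : Continuous S := by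
    rw [← continuousOn_univ]
    have huniv : (Set.univ : Set ℂ) = closure U ∪ Uᶜ := by
      ext z
      simp only [Set.mem_univ, Set.mem_union, Set.mem_compl_iff, true_iff]
      by_cases hz : z ∈ U
      · exact Or.inl (subset_closure hz)
      · exact Or.inr hz
    rw [huniv]
    refine ContinuousOn.union_of_isClosed ?_ (hzpow.congr hSU) isClosed_closure
      hUo.isClosed_compl
    exact ContinuousOn.congr ((Complex.continuous_exp.comp G.continuous).continuousOn.div
      (hψ.mono hcl) fun z hz => h0 z (hcl hz)) hScl
  have hS0 : ∀ z, S z ≠ 0 := by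
    intro z
    by_cases hz : z ∈ closure U
    · rw [hScl z hz]
      exact div_ne_zero (Complex.exp_ne_zero _) (h0 z (hcl hz))
    · have hz' : z ∉ U := fun h => hz (subset_closure h)
      rw [hSU z hz']
      exact zpow_ne_zero _ (sub_ne_zero.2 fun h => hz' (h ▸ haU))
  obtain ⟨R, hR, hUR⟩ := hb.subset_ball_lt 0 a
  refine not_hasLogOn_sphere hR hn (((HasLogOn.univ_of_simplyConnected hScont hS0).mono
    (Set.subset_univ (Metric.sphere a R))).congr fun z hz => (hSU z fun hzU => ?_).symm)
  have h1 := hUR hzU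
  rw [Metric.mem_sphere] at hz
  rw [Metric.mem_ball] at h1
  linarith

theorem mem_component_of_hasLogOn {K : Set ℂ} (hK : IsCompact K) {a b : ℂ} (ha : a ∉ K)
    (hb : b ∉ K) (h : HasLogOn K fun z => (z - a) / (z - b)) :
    b ∈ connectedComponentIn Kᶜ a := by
  by_contra hab
  have hba : a ∉ connectedComponentIn Kᶜ b := fun h => hab (mem_component_comm h)
  rcases bounded_component_or hK hab hb with hbd | hbd
  · have hne : ∀ z ∈ connectedComponentIn Kᶜ a ∪ K, z - b ≠ 0 := by
      rintro z (hz | hz) h0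
      · exact hab (sub_eq_zero.1 h0 ▸ hz)
      · exact hb (sub_eq_zero.1 h0 ▸ hz)
    refine not_hasLogOn_of_bounded hK ha hbd one_ne_zero (ψ := fun z => (z - b)⁻¹)
      ((continuousOn_id.sub continuousOn_const).inv₀ hne) (fun z hz => inv_ne_zero (hne z hz)) ?_
    exact h.congr fun z _ => by simp [div_eq_mul_inv]
  · have hne : ∀ z ∈ connectedComponentIn Kᶜ b ∪ K, z - a ≠ 0 := by
      rintro z (hz | hz) h0
      · exact hba (sub_eq_zero.1 h0 ▸ hz)
      · exact ha (sub_eq_zero.1 h0 ▸ hz)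
    refine not_hasLogOn_of_bounded hK hb hbd one_ne_zero (ψ := fun z => (z - a)⁻¹)
      ((continuousOn_id.sub continuousOn_const).inv₀ hne) (fun z hz => inv_ne_zero (hne z hz)) ?_
    exact h.inv.congr fun z _ => by simp [div_eq_mul_inv]

/-- Logarithms on two closed sets that agree on the intersection can be glued. -/
theorem HasLogOn.union {K L : Set ℂ} (hK : IsClosed K) (hL : IsClosed L) {φ g h : ℂ → ℂ}
    (hg : ContinuousOn g K) (hgφ : ∀ z ∈ K, φ z = Complex.exp (g z))
    (hh : ContinuousOn h L) (hhφ : ∀ z ∈ L, φ z = Complex.exp (h z))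
    (hgh : ∀ z ∈ K ∩ L, g z = h z) : HasLogOn (K ∪ L) φ := by
  classical
  have h1 : ∀ z ∈ K, K.piecewise g h z = g z := fun z hz => by simp [hz]
  have h2 : ∀ z ∈ L, K.piecewise g h z = h z := fun z hz => by
    by_cases hzK : z ∈ K
    · simp [hzK, hgh z ⟨hzK, hz⟩]
    · simp [hzK]
  refine ⟨K.piecewise g h, (hg.congr h1).union_of_isClosed (hh.congr h2) hK hL, ?_⟩
  rintro z (hz | hz)
  · rw [h1 z hz, hgφ z hz]
  · rw [h2 z hz, hhφ z hz]

/-- Gluing logarithms on a closed set and on an arc meeting it only in its end points. -/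
theorem HasLogOn.union_arc {K : Set ℂ} (hK : IsClosed K) {γ : ℝ → ℂ}
    (hγ : ContinuousOn γ (Set.Icc 0 1)) (hγK : ∀ t ∈ Set.Ioo (0 : ℝ) 1, γ t ∉ K) {φ g h : ℂ → ℂ}
    (hg : ContinuousOn g K) (hgφ : ∀ z ∈ K, φ z = Complex.exp (g z))
    (hh : ContinuousOn h (γ '' Set.Icc 0 1))
    (hhφ : ∀ z ∈ γ '' Set.Icc 0 1, φ z = Complex.exp (h z)) (h0 : γ 0 ∈ K)
    (hd : g (γ 1) - h (γ 1) = g (γ 0) - h (γ 0)) : HasLogOn (K ∪ γ '' Set.Icc 0 1) φ := by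
  have h0L : γ 0 ∈ γ '' Set.Icc 0 1 := ⟨0, by simp, rfl⟩
  refine HasLogOn.union hK (isCompact_Icc.image_of_continuousOn hγ).isClosed hg hgφ
    (h := fun z => h z + (g (γ 0) - h (γ 0))) (hh.add continuousOn_const) ?_ ?_
  · intro z hz
    rw [Complex.exp_add, Complex.exp_sub, ← hgφ _ h0, ← hhφ _ h0L, div_self, mul_one, hhφ z hz]
    rw [hgφ _ h0]
    exact Complex.exp_ne_zero _
  · rintro _ ⟨hzK, t, ht, rfl⟩
    rcases eq_or_lt_of_le ht.1 with rfl | h0t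
    · ring
    rcases eq_or_lt_of_le ht.2 with rfl | ht1
    · linear_combination hd
    exact absurd hzK (hγK t ⟨h0t, ht1⟩)

/-- Adding an arc splits a component of the complement into at most two. -/
theorem component_union_arc {K : Set ℂ} (hK : IsCompact K) {γ : ℝ → ℂ}
    (hγ : ContinuousOn γ (Set.Icc 0 1)) (hinj : Set.InjOn γ (Set.Icc 0 1))
    (hγK : ∀ t ∈ Set.Ioo (0 : ℝ) 1, γ t ∉ K) (h0 : γ 0 ∈ K) (h1 : γ 1 ∈ K) {a b c : ℂ}
    (ha : a ∉ K ∪ γ '' Set.Icc 0 1) (hb : b ∉ K ∪ γ '' Set.Icc 0 1)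
    (hc : c ∉ K ∪ γ '' Set.Icc 0 1)
    (hab : b ∈ connectedComponentIn Kᶜ a) (hac : c ∈ connectedComponentIn Kᶜ a) :
    b ∈ connectedComponentIn (K ∪ γ '' Set.Icc 0 1)ᶜ a ∨
      c ∈ connectedComponentIn (K ∪ γ '' Set.Icc 0 1)ᶜ a ∨
      c ∈ connectedComponentIn (K ∪ γ '' Set.Icc 0 1)ᶜ b := by
  have hLc : IsCompact (γ '' Set.Icc 0 1) := isCompact_Icc.image_of_continuousOn hγ
  have hM : IsCompact (K ∪ γ '' Set.Icc 0 1) := hK.union hLc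
  have h0L : γ 0 ∈ γ '' Set.Icc 0 1 := ⟨0, by simp, rfl⟩
  have h1L : γ 1 ∈ γ '' Set.Icc 0 1 := ⟨1, by simp, rfl⟩
  have hLne : ∀ x ∉ K ∪ γ '' Set.Icc 0 1, ∀ z ∈ γ '' Set.Icc 0 1, z - x ≠ 0 :=
    fun x hx z hz h => hx (Or.inr (sub_eq_zero.1 h ▸ hz))
  have hlogs : ∀ x, x ∉ K ∪ γ '' Set.Icc 0 1 → x ∈ connectedComponentIn Kᶜ a →
      ∃ g h : ℂ → ℂ, ∃ d : ℤ, ContinuousOn g K ∧ (∀ z ∈ K, (z - a) / (z - x) = Complex.exp (g z)) ∧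
        ContinuousOn h (γ '' Set.Icc 0 1) ∧
        (∀ z ∈ γ '' Set.Icc 0 1, (z - a) / (z - x) = Complex.exp (h z)) ∧
        g (γ 1) - h (γ 1) = g (γ 0) - h (γ 0) + d * (2 * Real.pi * Complex.I) := by
    intro x hx hax
    obtain ⟨g, hg, hge⟩ := HasLogOn.of_mem_component hK hax
    obtain ⟨h, hh, hhe⟩ := HasLogOn.arc hγ hinj (φ := fun z => (z - a) / (z - x))
      ((continuousOn_id.sub continuousOn_const).div (continuousOn_id.sub continuousOn_const)
        (hLne x hx)) (fun z hz => div_ne_zero (hLne a ha z hz) (hLne x hx z hz))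
    have he : Complex.exp (g (γ 1) - h (γ 1)) = Complex.exp (g (γ 0) - h (γ 0)) := by
      rw [Complex.exp_sub, Complex.exp_sub, ← hge _ h0, ← hge _ h1, ← hhe _ h0L, ← hhe _ h1L]
      simp only
      rw [div_self (div_ne_zero (hLne a ha _ h1L) (hLne x hx _ h1L)),
        div_self (div_ne_zero (hLne a ha _ h0L) (hLne x hx _ h0L))]
    obtain ⟨d, hd⟩ := Complex.exp_eq_exp_iff_exists_int.1 he
    exact ⟨g, h, d, hg, hge, hh, hhe, hd⟩
  obtain ⟨g₁, h₁, d₁, hg₁, hge₁, hh₁, hhe₁, hd₁⟩ := hlogs b hb hab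
  obtain ⟨g₂, h₂, d₂, hg₂, hge₂, hh₂, hhe₂, hd₂⟩ := hlogs c hc hac
  by_cases hz₁ : d₁ = 0
  · left
    refine mem_component_of_hasLogOn hM ha hb
      (HasLogOn.union_arc hK.isClosed hγ hγK hg₁ hge₁ hh₁ hhe₁ h0 ?_)
    rw [hd₁, hz₁]
    simp
  by_cases hz₂ : d₂ = 0
  · right
    left
    refine mem_component_of_hasLogOn hM ha hc
      (HasLogOn.union_arc hK.isClosed hγ hγK hg₂ hge₂ hh₂ hhe₂ h0 ?_)
    rw [hd₂, hz₂]
    simp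
  by_contra! hcon
  obtain ⟨hnab, hnac, hnbc⟩ := hcon
  have hlog : HasLogOn (K ∪ γ '' Set.Icc 0 1)
      fun z => ((z - a) / (z - b)) ^ d₂ * ((z - a) / (z - c)) ^ (-d₁) := by
    refine HasLogOn.union_arc hK.isClosed hγ hγK (g := fun z => d₂ * g₁ z + (-d₁ : ℤ) * g₂ z)
      (h := fun z => d₂ * h₁ z + (-d₁ : ℤ) * h₂ z)
      ((continuousOn_const.mul hg₁).add (continuousOn_const.mul hg₂)) ?_
      ((continuousOn_const.mul hh₁).add (continuousOn_const.mul hh₂)) ?_ h0 ?_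
    · intro z hz
      rw [hge₁ z hz, hge₂ z hz, Complex.exp_add, Complex.exp_int_mul, Complex.exp_int_mul]
    · intro z hz
      rw [hhe₁ z hz, hhe₂ z hz, Complex.exp_add, Complex.exp_int_mul, Complex.exp_int_mul]
    · push_cast
      linear_combination (d₂ : ℂ) * hd₁ - (d₁ : ℂ) * hd₂
  have hne : ∀ x y : ℂ, y ∉ K ∪ γ '' Set.Icc 0 1 →
      y ∉ connectedComponentIn (K ∪ γ '' Set.Icc 0 1)ᶜ x →
      ∀ z ∈ connectedComponentIn (K ∪ γ '' Set.Icc 0 1)ᶜ x ∪ (K ∪ γ '' Set.Icc 0 1),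
        z - y ≠ 0 := by
    rintro x y hy hxy z (hz | hz) h
    · exact hxy (sub_eq_zero.1 h ▸ hz)
    · exact hy (sub_eq_zero.1 h ▸ hz)
  have hMne : ∀ x ∉ K ∪ γ '' Set.Icc 0 1, ∀ z ∈ K ∪ γ '' Set.Icc 0 1, z - x ≠ 0 :=
    fun x hx z hz h => hx (sub_eq_zero.1 h ▸ hz)
  have hnba : a ∉ connectedComponentIn (K ∪ γ '' Set.Icc 0 1)ᶜ b :=
    fun h => hnab (mem_component_comm h)
  have hnca : a ∉ connectedComponentIn (K ∪ γ '' Set.Icc 0 1)ᶜ c :=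
    fun h => hnac (mem_component_comm h)
  have hncb : b ∉ connectedComponentIn (K ∪ γ '' Set.Icc 0 1)ᶜ c :=
    fun h => hnbc (mem_component_comm h)
  rcases bounded_component_or hM hnbc hc with hbd | hbd
  · refine not_hasLogOn_of_bounded hM hb hbd (neg_ne_zero.2 hz₂)
      (ψ := fun z => (z - a) ^ (d₂ - d₁) * (z - c) ^ d₁) ?_ ?_ (hlog.congr fun z hz => ?_)
    · exact ((continuousOn_id.sub continuousOn_const).zpow₀ _ fun z hz =>
        Or.inl (hne b a ha hnba z hz)).mul
        ((continuousOn_id.sub continuousOn_const).zpow₀ _ fun z hz =>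
        Or.inl (hne b c hc hnbc z hz))
    · exact fun z hz => mul_ne_zero (zpow_ne_zero _ (hne b a ha hnba z hz))
        (zpow_ne_zero _ (hne b c hc hnbc z hz))
    · rw [div_zpow, div_zpow, zpow_sub₀ (hMne a ha z hz), zpow_neg, zpow_neg, zpow_neg]
      have := zpow_ne_zero d₁ (hMne a ha z hz)
      have := zpow_ne_zero d₁ (hMne c hc z hz)
      have := zpow_ne_zero d₂ (hMne b hb z hz)
      field_simp
  · refine not_hasLogOn_of_bounded hM hc hbd hz₁
      (ψ := fun z => (z - a) ^ (d₂ - d₁) * (z - b) ^ (-d₂)) ?_ ?_ (hlog.congr fun z hz => ?_)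
    · exact ((continuousOn_id.sub continuousOn_const).zpow₀ _ fun z hz =>
        Or.inl (hne c a ha hnca z hz)).mul
        ((continuousOn_id.sub continuousOn_const).zpow₀ _ fun z hz =>
        Or.inl (hne c b hb hncb z hz))
    · exact fun z hz => mul_ne_zero (zpow_ne_zero _ (hne c a ha hnca z hz))
        (zpow_ne_zero _ (hne c b hb hncb z hz))
    · rw [div_zpow, div_zpow, zpow_sub₀ (hMne a ha z hz), zpow_neg, zpow_neg, zpow_neg]
      have := zpow_ne_zero d₁ (hMne a ha z hz)
      have := zpow_ne_zero d₁ (hMne c hc z hz)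
      have := zpow_ne_zero d₂ (hMne b hb z hz)
      field_simp

/-- Products of powers of functions `z - a` with `a ∈ A`. -/
inductive RationalWith (A : Set ℂ) : (ℂ → ℂ) → Prop
  | one : RationalWith A fun _ => 1
  | sub (a : ℂ) (ha : a ∈ A) : RationalWith A fun z => z - a
  | mul {R S : ℂ → ℂ} (hR : RationalWith A R) (hS : RationalWith A S) :
      RationalWith A fun z => R z * S z
  | inv {R : ℂ → ℂ} (hR : RationalWith A R) : RationalWith A fun z => (R z)⁻¹

namespace RationalWith

variable {A B : Set ℂ} {R : ℂ → ℂ}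

theorem mono (hR : RationalWith A R) (h : A ⊆ B) : RationalWith B R := by
  induction hR with
  | one => exact .one
  | sub a ha => exact .sub a (h ha)
  | mul _ _ ih₁ ih₂ => exact ih₁.mul ih₂
  | inv _ ih => exact ih.inv

theorem ne_zero (hR : RationalWith A R) {z : ℂ} (hz : z ∉ A) : R z ≠ 0 := by
  induction hR with
  | one => exact one_ne_zero
  | sub a ha => exact sub_ne_zero.2 fun h => hz (h ▸ ha)
  | mul _ _ ih₁ ih₂ => exact mul_ne_zero ih₁ ih₂
  | inv _ ih => exact inv_ne_zero ih

theorem zpow (hR : RationalWith A R) (n : ℤ) : RationalWith A fun z => R z ^ n := by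
  have hpow : ∀ n : ℕ, RationalWith A fun z => R z ^ n := by
    intro n
    induction n with
    | zero => simpa using one
    | succ n ih => simpa only [pow_succ] using ih.mul hR
  cases n with
  | ofNat n => simpa using hpow n
  | negSucc n => simpa only [zpow_negSucc] using (hpow (n + 1)).inv

/-- If all factors have logarithms, then so does the product. -/
theorem hasLogOn (hR : RationalWith A R) {K : Set ℂ}
    (h : ∀ a ∈ A, HasLogOn K fun z => z - a) : HasLogOn K R := by
  induction hR with
  | one => exact HasLogOn.const K one_ne_zero
  | sub a ha => exact h a ha
  | mul _ _ ih₁ ih₂ => exact ih₁.mul ih₂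
  | inv _ ih => exact ih.inv

end RationalWith

theorem HasLogOn.sub_of_re_le {ω a : ℂ} (hω : ω ≠ 0) {K : Set ℂ} (haK : a ∉ K)
    (h : ∀ z ∈ K, (ω * z).re ≤ (ω * a).re) : HasLogOn K fun z => z - a := by
  have h1 : HasLogOn K fun z => -(ω * (z - a)) := by
    refine HasLogOn.of_slitPlane (by fun_prop) fun z hz => ?_
    have hne : -(ω * (z - a)) ≠ 0 :=
      neg_ne_zero.2 (mul_ne_zero hω (sub_ne_zero.2 fun h => haK (h ▸ hz)))
    have hre : 0 ≤ (-(ω * (z - a))).re := by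
      have := h z hz
      rw [mul_sub, Complex.neg_re, Complex.sub_re]
      linarith
    rw [Complex.mem_slitPlane_iff]
    rcases hre.lt_or_eq with hlt | heq
    · exact Or.inl hlt
    · exact Or.inr fun him => hne (Complex.ext heq.symm him)
  refine (h1.mul (HasLogOn.const K (inv_ne_zero (neg_ne_zero.2 hω)))).congr fun z _ => ?_
  field_simp

theorem HasLogOn.sub_of_le_re {ω a : ℂ} (hω : ω ≠ 0) {K : Set ℂ} (haK : a ∉ K)
    (h : ∀ z ∈ K, (ω * a).re ≤ (ω * z).re) : HasLogOn K fun z => z - a :=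
  HasLogOn.sub_of_re_le (neg_ne_zero.2 hω) haK fun z hz => by
    rw [neg_mul, neg_mul, Complex.neg_re, Complex.neg_re]
    exact neg_le_neg (h z hz)

/-- Logarithms of `z - a` on the two closed half planes cut out by a line through `a`: they agree
on one ray of the line and differ by `2πi` on the other. -/
theorem exists_logs_half_planes {ω a : ℂ} (hω : ω ≠ 0) :
    ∃ g h : ℂ → ℂ,
      ContinuousOn g {z | z ≠ a ∧ (ω * z).re ≤ (ω * a).re} ∧
      (∀ z, z ≠ a → (ω * z).re ≤ (ω * a).re → z - a = Complex.exp (g z)) ∧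
      ContinuousOn h {z | z ≠ a ∧ (ω * a).re ≤ (ω * z).re} ∧
      (∀ z, z ≠ a → (ω * a).re ≤ (ω * z).re → z - a = Complex.exp (h z)) ∧
      ∀ z, z ≠ a → (ω * z).re = (ω * a).re →
        ((ω * z).im < (ω * a).im → g z = h z + 2 * Real.pi * Complex.I) ∧
        ((ω * a).im < (ω * z).im → g z = h z) := by
  have hslit : ∀ w : ℂ, w ≠ 0 → 0 ≤ w.re → w ∈ Complex.slitPlane := by
    intro w hw hre
    rw [Complex.mem_slitPlane_iff]
    rcases hre.lt_or_eq with hlt | heq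
    · exact Or.inl hlt
    · exact Or.inr fun him => hw (Complex.ext heq.symm him)
  have hne : ∀ z, z ≠ a → ω * (z - a) ≠ 0 := fun z hz => mul_ne_zero hω (sub_ne_zero.2 hz)
  have hexp : Complex.exp (Complex.log ω⁻¹) = ω⁻¹ := Complex.exp_log (inv_ne_zero hω)
  refine ⟨fun z => Complex.log (-(ω * (z - a))) + Real.pi * Complex.I + Complex.log ω⁻¹,
    fun z => Complex.log (ω * (z - a)) + Complex.log ω⁻¹, ?_, ?_, ?_, ?_, ?_⟩
  · refine ((ContinuousOn.clog (by fun_prop) ?_).add continuousOn_const).add continuousOn_const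
    rintro z ⟨hz, hle⟩
    refine hslit _ (neg_ne_zero.2 (hne z hz)) ?_
    rw [mul_sub, Complex.neg_re, Complex.sub_re]
    linarith
  · intro z hz _
    rw [Complex.exp_add, Complex.exp_add, Complex.exp_log (neg_ne_zero.2 (hne z hz)),
      Complex.exp_pi_mul_I, hexp]
    field_simp
  · refine (ContinuousOn.clog (by fun_prop) ?_).add continuousOn_const
    rintro z ⟨hz, hle⟩
    refine hslit _ (hne z hz) ?_
    rw [mul_sub, Complex.sub_re]
    linarith
  · intro z hz _
    rw [Complex.exp_add, Complex.exp_log (hne z hz), hexp]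
    field_simp
  · intro z hz hre
    have hre0 : (ω * (z - a)).re = 0 := by
      rw [mul_sub, Complex.sub_re]
      linarith
    have him0 : (ω * (z - a)).im = (ω * z).im - (ω * a).im := by rw [mul_sub, Complex.sub_im]
    constructor
    · intro hlt
      have : Complex.log (-(ω * (z - a))) =
          Complex.log (ω * (z - a)) + Real.pi * Complex.I := by
        have h1 : (ω * (z - a)).im < 0 := by linarith
        rw [Complex.log, Complex.log, Complex.arg_neg_eq_arg_add_pi_of_im_neg h1, norm_neg]
        push_cast
        ring
      simp only [this]
      ring
    · intro hlt
      have : Complex.log (-(ω * (z - a))) =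
          Complex.log (ω * (z - a)) - Real.pi * Complex.I := by
        have h1 : 0 < (ω * (z - a)).im := by linarith
        rw [Complex.log, Complex.log, Complex.arg_neg_eq_arg_sub_pi_of_im_pos h1, norm_neg]
        push_cast
        ring
      simp only [this]
      ring

/-- On the part of `K` on a segment of the line `Re (ω z) = c`, any continuous integer function is
the discrepancy of logarithms, on the two half planes, of a rational function with zeros and poles
on the segment and outside `K`. -/
theorem exists_rational_discrepancy {K : Set ℂ} (hK : IsCompact K) {ω : ℂ} (hω : ω ≠ 0)
    {c p q : ℝ} (hpq : p ≤ q) {m : ℂ → ℤ}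
    (hm : ContinuousOn m (K ∩ {z | (ω * z).re = c ∧ p ≤ (ω * z).im ∧ (ω * z).im ≤ q})) :
    ∃ R g h : ℂ → ℂ,
      RationalWith ({z | (ω * z).re = c ∧ p ≤ (ω * z).im ∧ (ω * z).im ≤ q} \ K) R ∧
      ContinuousOn g (K ∩ {z | (ω * z).re ≤ c}) ∧
      (∀ z ∈ K, (ω * z).re ≤ c → R z = Complex.exp (g z)) ∧
      ContinuousOn h (K ∩ {z | c ≤ (ω * z).re}) ∧
      (∀ z ∈ K, c ≤ (ω * z).re → R z = Complex.exp (h z)) ∧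
      ∀ z ∈ K, (ω * z).re = c → p ≤ (ω * z).im → (ω * z).im ≤ q →
        g z = h z + m z * (2 * Real.pi * Complex.I) := by
  set E : Set ℂ := {z | (ω * z).re = c ∧ p ≤ (ω * z).im ∧ (ω * z).im ≤ q} with hE
  have hEc : IsClosed E := by
    have hcont : Continuous fun z : ℂ => ω * z := by fun_prop
    exact (isClosed_eq (Complex.continuous_re.comp hcont) continuous_const).inter
      ((isClosed_le continuous_const (Complex.continuous_im.comp hcont)).inter
        (isClosed_le (Complex.continuous_im.comp hcont) continuous_const))
  have huc := (hK.inter_right hEc).uniformContinuousOn_of_continuous hm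
  obtain ⟨ε, hε, hconst⟩ := Metric.uniformContinuousOn_iff.1 huc 1 one_pos
  have hωpos : 0 < ‖ω‖ := norm_pos_iff.2 hω
  have hm' : ∀ z ∈ K ∩ E, ∀ w ∈ K ∩ E, |(ω * z).im - (ω * w).im| ≤ ‖ω‖ * ε / 2 → m z = m w := by
    intro z hz w hw hzw
    have hd : dist z w < ε := by
      have h1 : ω * (z - w) = (((ω * z).im - (ω * w).im : ℝ) : ℂ) * Complex.I := by
        apply Complex.ext
        · rw [mul_sub, Complex.sub_re, hz.2.1, hw.2.1]
          simp
        · rw [mul_sub, Complex.sub_im]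
          simp
      have h2 : ‖ω‖ * dist z w = |(ω * z).im - (ω * w).im| := by
        rw [dist_eq_norm, ← norm_mul, h1, norm_mul, Complex.norm_I, mul_one, Complex.norm_real,
          Real.norm_eq_abs]
      have h3 : ‖ω‖ * dist z w < ‖ω‖ * ε := by
        have := mul_pos hωpos hε
        linarith
      exact lt_of_mul_lt_mul_left h3 hωpos.le
    have := hconst z hz w hw hd
    rw [Int.dist_eq] at this
    have h4 : |m z - m w| < 1 := by exact_mod_cast this
    rw [Int.abs_lt_one_iff] at h4
    omega
  set δ : ℝ := ‖ω‖ * ε / 2 with hδ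
  have hδpos : 0 < δ := by positivity
  let Inv : ℝ → Prop := fun s => ∃ R g h : ℂ → ℂ, ∃ v : ℤ,
      RationalWith (E \ K) R ∧ ContinuousOn g (K ∩ {z | (ω * z).re ≤ c}) ∧
      (∀ z ∈ K, (ω * z).re ≤ c → R z = Complex.exp (g z)) ∧
      ContinuousOn h (K ∩ {z | c ≤ (ω * z).re}) ∧
      (∀ z ∈ K, c ≤ (ω * z).re → R z = Complex.exp (h z)) ∧
      (∀ z ∈ K ∩ E, (ω * z).im ≤ s → g z = h z + m z * (2 * Real.pi * Complex.I)) ∧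
      (∀ z ∈ K ∩ E, s ≤ (ω * z).im → g z = h z + v * (2 * Real.pi * Complex.I))
  have hstep : ∀ s s', p ≤ s → s ≤ s' → s' ≤ q → s' ≤ s + δ → Inv s → Inv s' := by
    rintro s s' hps hss' hs'q hsδ ⟨R, g, h, v, hR, hg, hge, hh, hhe, hlow, hhigh⟩
    by_cases hex : ∃ z ∈ K ∩ E, s ≤ (ω * z).im ∧ (ω * z).im ≤ s' ∧ m z ≠ v
    · obtain ⟨z₀, hz₀, hsz₀, hz₀s', hmv⟩ := hex
      have hval : ∀ z ∈ K ∩ E, s ≤ (ω * z).im → (ω * z).im ≤ s' → m z = m z₀ := by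
        intro z hz h1 h2
        refine hm' z hz z₀ hz₀ (abs_le.2 ⟨?_, ?_⟩) <;> linarith
      set a : ℂ := ω⁻¹ * (c + s * Complex.I) with ha
      have hωa : ω * a = c + s * Complex.I := by
        rw [ha]
        field_simp
      have hare : (ω * a).re = c := by simp [hωa]
      have haim : (ω * a).im = s := by simp [hωa]
      have haE : a ∈ E := ⟨hare, by rw [haim]; exact hps, by rw [haim]; linarith⟩
      have haK : a ∉ K := by
        intro haK
        have h1 := hlow a ⟨haK, haE⟩ haim.le
        have h2 := hhigh a ⟨haK, haE⟩ haim.ge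
        have h3 := hval a ⟨haK, haE⟩ haim.ge (haim.le.trans hss')
        rw [h1] at h2
        have h4 := mul_right_cancel₀ Complex.two_pi_I_ne_zero (add_left_cancel h2)
        exact hmv (by rw [← h3]; exact_mod_cast h4)
      have hKa : ∀ z ∈ K, z ≠ a := fun z hz h => haK (h ▸ hz)
      obtain ⟨g₁, h₁, hg₁, hge₁, hh₁, hhe₁, hgh₁⟩ := exists_logs_half_planes (a := a) hω
      rw [hare] at hg₁ hge₁ hh₁ hhe₁ hgh₁
      rw [haim] at hgh₁
      refine ⟨fun z => R z * (z - a) ^ (v - m z₀),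
        fun z => g z + ((v - m z₀ : ℤ) : ℂ) * g₁ z
          + ((m z₀ - v : ℤ) : ℂ) * (2 * Real.pi * Complex.I),
        fun z => h z + ((v - m z₀ : ℤ) : ℂ) * h₁ z, m z₀,
        hR.mul ((RationalWith.sub (A := E \ K) a ⟨haE, haK⟩).zpow _), ?_, ?_, ?_, ?_, ?_, ?_⟩
      · have hg₁' : ContinuousOn g₁ (K ∩ {z | (ω * z).re ≤ c}) :=
          hg₁.mono fun z hz => ⟨hKa z hz.1, hz.2⟩
        exact (hg.add (continuousOn_const.mul hg₁')).add continuousOn_const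
      · intro z hz hle
        rw [Complex.exp_add, Complex.exp_add, Complex.exp_int_mul_two_pi_mul_I, mul_one,
          Complex.exp_int_mul, ← hge z hz hle, ← hge₁ z (hKa z hz) hle]
      · have hh₁' : ContinuousOn h₁ (K ∩ {z | c ≤ (ω * z).re}) :=
          hh₁.mono fun z hz => ⟨hKa z hz.1, hz.2⟩
        exact hh.add (continuousOn_const.mul hh₁')
      · intro z hz hle
        rw [Complex.exp_add, Complex.exp_int_mul, ← hhe z hz hle, ← hhe₁ z (hKa z hz) hle]
      · intro z hz hzs'
        have hne := hKa z hz.1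
        beta_reduce
        rcases lt_trichotomy (ω * z).im s with hlt | heq | hgt
        · rw [hlow z hz hlt.le, (hgh₁ z hne hz.2.1).1 hlt]
          push_cast
          ring
        · exact absurd (mul_left_cancel₀ hω (Complex.ext (hz.2.1.trans hare.symm)
            (heq.trans haim.symm))) hne
        · rw [hhigh z hz hgt.le, (hgh₁ z hne hz.2.1).2 hgt, hval z hz hgt.le hzs']
          push_cast
          ring
      · intro z hz hzs'
        have hne := hKa z hz.1
        beta_reduce
        rcases (hss'.trans hzs').lt_or_eq with hgt | heq
        · rw [hhigh z hz hgt.le, (hgh₁ z hne hz.2.1).2 hgt]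
          push_cast
          ring
        · exact absurd (mul_left_cancel₀ hω (Complex.ext (hz.2.1.trans hare.symm)
            (heq.symm.trans haim.symm))) hne
    · push Not at hex
      refine ⟨R, g, h, v, hR, hg, hge, hh, hhe, ?_, fun z hz hs => hhigh z hz (hss'.trans hs)⟩
      intro z hz hzs'
      rcases le_total (ω * z).im s with hle | hle
      · exact hlow z hz hle
      · rw [hex z hz hle hzs']
        exact hhigh z hz hle
  have hbase : Inv p := by
    by_cases hex : ∃ z ∈ K ∩ E, (ω * z).im = p
    · obtain ⟨z₀, hz₀, hz₀p⟩ := hex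
      refine ⟨fun _ => 1, fun _ => m z₀ * (2 * Real.pi * Complex.I), fun _ => 0, m z₀, .one,
        continuousOn_const, ?_, continuousOn_const, ?_, ?_, ?_⟩
      · intro z _ _
        rw [Complex.exp_int_mul_two_pi_mul_I]
      · simp
      · intro z hz hzp
        have : m z = m z₀ := hm' z hz z₀ hz₀ (by
          rw [hz₀p, le_antisymm hzp hz.2.2.1]
          simpa using hδpos.le)
        rw [this]
        simp
      · simp
    · push Not at hex
      refine ⟨fun _ => 1, fun _ => 0, fun _ => 0, 0, .one, continuousOn_const, by simp,
        continuousOn_const, by simp, ?_, by simp⟩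
      intro z hz hzp
      exact absurd (le_antisymm hzp hz.2.2.1) (hex z hz)
  have hall : ∀ n : ℕ, ∀ s, p ≤ s → s ≤ q → s ≤ p + n * δ → Inv s := by
    intro n
    induction n with
    | zero =>
      intro s h1 h2 h3
      have : s = p := by
        simp at h3
        linarith
      rwa [this]
    | succ n ih =>
      intro s h1 h2 h3
      push_cast at h3
      have hnδ : 0 ≤ (n : ℝ) * δ := by positivity
      refine hstep (max p (s - δ)) s (le_max_left _ _) (max_le h1 (by linarith)) h2 ?_
        (ih _ (le_max_left _ _) (max_le hpq (by linarith)) (max_le (by linarith) (by linarith)))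
      have := le_max_right p (s - δ)
      linarith
  obtain ⟨n, hn⟩ := exists_nat_gt ((q - p) / δ)
  rw [div_lt_iff₀ hδpos] at hn
  obtain ⟨R, g, h, v, hR, hg, hge, hh, hhe, hlow, -⟩ := hall n q hpq le_rfl (by linarith)
  exact ⟨R, g, h, hR, hg, hge, hh, hhe, fun z hz h1 h2 h3 => hlow z ⟨hz, h1, h2, h3⟩ h3⟩

/-- On `K ∩ Q`, the function `φ` is a rational function with zeros and poles in `Q \ K`, up to a
function with a logarithm. -/
def RationalUpToExp (K : Set ℂ) (φ : ℂ → ℂ) (Q : Set ℂ) : Prop :=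
  ∃ R, RationalWith (Q \ K) R ∧ HasLogOn (K ∩ Q) fun z => φ z / R z

/-- Merging two regions on different sides of a line. -/
theorem RationalUpToExp.union {K Q₁ Q₂ : Set ℂ} (hK : IsCompact K) (hQ₁ : IsClosed Q₁)
    (hQ₂ : IsClosed Q₂) {φ : ℂ → ℂ} (h₁ : RationalUpToExp K φ Q₁)
    (h₂ : RationalUpToExp K φ Q₂) {ω : ℂ} (hω : ω ≠ 0) {c p q : ℝ} (hpq : p ≤ q)
    (hle : ∀ z ∈ Q₁, (ω * z).re ≤ c) (hge : ∀ z ∈ Q₂, c ≤ (ω * z).re)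
    (hE : ∀ z, z ∈ Q₁ ∩ Q₂ ↔ (ω * z).re = c ∧ p ≤ (ω * z).im ∧ (ω * z).im ≤ q) :
    RationalUpToExp K φ (Q₁ ∪ Q₂) := by
  obtain ⟨R₁, hR₁, hlog₁⟩ := h₁
  obtain ⟨R₂, hR₂, hlog₂⟩ := h₂
  have hlog₁' : HasLogOn (K ∩ Q₁) R₂ := by
    refine hR₂.hasLogOn fun a ha => HasLogOn.sub_of_re_le hω (fun h => ha.2 h.1) fun z hz => ?_
    exact (hle z hz.2).trans (hge a ha.1)
  have hlog₂' : HasLogOn (K ∩ Q₂) R₁ := by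
    refine hR₁.hasLogOn fun a ha => HasLogOn.sub_of_le_re hω (fun h => ha.2 h.1) fun z hz => ?_
    exact (hle a ha.1).trans (hge z hz.2)
  obtain ⟨g, hg, hge₁⟩ : HasLogOn (K ∩ Q₁) fun z => φ z / (R₁ z * R₂ z) :=
    (hlog₁.div hlog₁').congr fun z _ => by rw [div_div]
  obtain ⟨h, hh, hhe₁⟩ : HasLogOn (K ∩ Q₂) fun z => φ z / (R₁ z * R₂ z) :=
    (hlog₂.div hlog₂').congr fun z _ => by rw [div_div, mul_comm (R₁ z)]
  have hset : K ∩ {z | (ω * z).re = c ∧ p ≤ (ω * z).im ∧ (ω * z).im ≤ q} =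
      K ∩ Q₁ ∩ (K ∩ Q₂) := by
    ext z
    have := hE z
    simp only [Set.mem_inter_iff, Set.mem_ofPred_eq] at this ⊢
    tauto
  obtain ⟨m, hm, hgm⟩ := exists_int_discrepancy (K := K ∩ Q₁ ∩ (K ∩ Q₂))
    (hg.mono Set.inter_subset_left) (hh.mono Set.inter_subset_right)
    (fun z hz => by rw [← hge₁ z hz.1, ← hhe₁ z hz.2])
  rw [← hset] at hm
  obtain ⟨R, g', h', hR, hg', hge', hh', hhe', hgh'⟩ :=
    exists_rational_discrepancy hK hω hpq hm
  refine ⟨fun z => R₁ z * R₂ z * R z, ?_, ?_⟩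
  · refine ((hR₁.mono ?_).mul (hR₂.mono ?_)).mul (hR.mono ?_)
    · exact Set.sdiff_subset_sdiff_left Set.subset_union_left
    · exact Set.sdiff_subset_sdiff_left Set.subset_union_right
    · exact Set.sdiff_subset_sdiff_left fun z hz => Or.inl ((hE z).2 hz).1
  · rw [Set.inter_union_distrib_left]
    refine HasLogOn.union (hK.isClosed.inter hQ₁) (hK.isClosed.inter hQ₂)
      (g := fun z => g z - g' z) (h := fun z => h z - h' z)
      (hg.sub (hg'.mono fun z hz => ⟨hz.1, hle z hz.2⟩)) ?_
      (hh.sub (hh'.mono fun z hz => ⟨hz.1, hge z hz.2⟩)) ?_ ?_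
    · intro z hz
      rw [Complex.exp_sub, ← hge₁ z hz, ← hge' z hz.1 (hle z hz.2), div_div]
    · intro z hz
      rw [Complex.exp_sub, ← hhe₁ z hz, ← hhe' z hz.1 (hge z hz.2), div_div]
    · intro z hz
      obtain ⟨e1, e2, e3⟩ := (hE z).1 ⟨hz.1.2, hz.2.2⟩
      rw [hgm z hz, hgh' z hz.1.1 e1 e2 e3]
      ring

/-- A property of intervals that holds for short intervals and is inherited by unions of adjacent
intervals holds for all intervals. -/
theorem interval_induction {P : ℝ → ℝ → Prop} {δ : ℝ} (hδ : 0 < δ)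
    (hshort : ∀ a b, a ≤ b → b ≤ a + δ → P a b)
    (hunion : ∀ a b c, a ≤ b → b ≤ c → P a b → P b c → P a c) {a b : ℝ} (hab : a ≤ b) :
    P a b := by
  have hall : ∀ n : ℕ, ∀ b, a ≤ b → b ≤ a + n * δ → P a b := by
    intro n
    induction n with
    | zero =>
      intro b h1 h2
      exact hshort a b h1 (by simp at h2; linarith)
    | succ n ih =>
      intro b h1 h2
      push_cast at h2
      have hn : 0 ≤ (n : ℝ) * δ := by positivity
      have h3 : max a (b - δ) ≤ b := max_le h1 (by linarith)
      refine hunion a _ b (le_max_left _ _) h3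
        (ih _ (le_max_left _ _) (max_le (by linarith) (by linarith))) (hshort _ _ h3 ?_)
      have := le_max_right a (b - δ)
      linarith
  obtain ⟨n, hn⟩ := exists_nat_gt ((b - a) / δ)
  rw [div_lt_iff₀ hδ] at hn
  exact hall n b hab (by linarith)

/-- Every nowhere vanishing continuous function on a compact plane set is the product of a
rational function and a function with a logarithm. -/
theorem exists_rational_hasLogOn {K : Set ℂ} (hK : IsCompact K) {φ : ℂ → ℂ}
    (hφ : ContinuousOn φ K) (h0 : ∀ z ∈ K, φ z ≠ 0) :
    ∃ R, RationalWith Kᶜ R ∧ HasLogOn K fun z => φ z / R z := by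
  rcases K.eq_empty_or_nonempty with rfl | hne
  · exact ⟨_, .one, fun _ => 0, by simp, by simp⟩
  obtain ⟨z₀, hz₀, hmin⟩ := hK.exists_isMinOn hne hφ.norm
  have hε : 0 < ‖φ z₀‖ := norm_pos_iff.2 (h0 z₀ hz₀)
  obtain ⟨δ, hδ, huc⟩ := Metric.uniformContinuousOn_iff.1
    (hK.uniformContinuousOn_of_continuous hφ) _ hε
  have hsmall : ∀ Q : Set ℂ, (∀ z ∈ Q, ∀ w ∈ Q, dist z w < δ) → RationalUpToExp K φ Q := by
    intro Q hQ
    refine ⟨_, .one, ?_⟩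
    rcases (K ∩ Q).eq_empty_or_nonempty with hemp | ⟨w, hw⟩
    · rw [hemp]
      exact ⟨fun _ => 0, by simp, by simp⟩
    have h1 : HasLogOn (K ∩ Q) fun z => φ z / φ w := by
      refine HasLogOn.of_norm_sub_one_lt ((hφ.mono Set.inter_subset_left).div_const _)
        fun z hz => ?_
      have hw0 := h0 w hw.1
      have : φ z / φ w - 1 = (φ z - φ w) / φ w := by field_simp
      rw [this, norm_div, div_lt_one (norm_pos_iff.2 hw0), ← dist_eq_norm]
      exact (huc z hz.1 w hw.1 (hQ z hz.2 w hw.2)).trans_le (hmin hw.1)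
    refine (h1.mul (HasLogOn.const _ (h0 w hw.1))).congr fun z _ => ?_
    have hw0 := h0 w hw.1
    field_simp
  have hclosed : ∀ a b c d : ℝ, IsClosed (Set.Icc a b ×ℂ Set.Icc c d) :=
    fun a b c d => isClosed_Icc.reProdIm isClosed_Icc
  have hδ' : 0 < δ / 3 := by positivity
  have hall : ∀ a b c d : ℝ, a ≤ b → c ≤ d →
      RationalUpToExp K φ (Set.Icc a b ×ℂ Set.Icc c d) := by
    intro a b c d hab hcd
    refine interval_induction (P := fun c d => RationalUpToExp K φ (Set.Icc a b ×ℂ Set.Icc c d))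
      hδ' ?_ ?_ hcd
    · intro c d hcd hd
      refine interval_induction
        (P := fun a b => RationalUpToExp K φ (Set.Icc a b ×ℂ Set.Icc c d)) hδ' ?_ ?_ hab
      · intro a b hab hb
        refine hsmall _ fun z hz w hw => ?_
        rw [Complex.mem_reProdIm] at hz hw
        rw [dist_eq_norm]
        refine (Complex.norm_le_abs_re_add_abs_im _).trans_lt ?_
        have h1 : |(z - w).re| ≤ δ / 3 := by
          rw [Complex.sub_re, abs_le]
          constructor <;> linarith [hz.1.1, hz.1.2, hw.1.1, hw.1.2]
        have h2 : |(z - w).im| ≤ δ / 3 := by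
          rw [Complex.sub_im, abs_le]
          constructor <;> linarith [hz.2.1, hz.2.2, hw.2.1, hw.2.2]
        linarith
      · intro a b e hab hbe h1 h2
        have := RationalUpToExp.union hK (hclosed a b c d) (hclosed b e c d) h1 h2
          (ω := 1) one_ne_zero (c := b) hcd
          (fun z hz => by simpa using hz.1.2) (fun z hz => by simpa using hz.1.1)
          (fun z => by
            simp only [Set.mem_inter_iff, Complex.mem_reProdIm, Set.mem_Icc, one_mul]
            constructor
            · rintro ⟨⟨⟨h1, h2⟩, h3⟩, ⟨h4, h5⟩, h6⟩
              exact ⟨by linarith, h3⟩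
            · rintro ⟨h1, h2⟩
              exact ⟨⟨⟨by linarith, by linarith⟩, h2⟩, ⟨by linarith, by linarith⟩, h2⟩)
        convert this using 1
        ext z
        simp only [Set.mem_union, Complex.mem_reProdIm, Set.mem_Icc]
        constructor
        · rintro ⟨⟨h1, h2⟩, h3⟩
          rcases le_total z.re b with h | h
          · exact Or.inl ⟨⟨h1, h⟩, h3⟩
          · exact Or.inr ⟨⟨h, h2⟩, h3⟩
        · rintro (⟨⟨h1, h2⟩, h3⟩ | ⟨⟨h1, h2⟩, h3⟩)
          · exact ⟨⟨h1, by linarith⟩, h3⟩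
          · exact ⟨⟨by linarith, h2⟩, h3⟩
    · intro c d e hcd hde h1 h2
      have := RationalUpToExp.union hK (hclosed a b c d) (hclosed a b d e) h1 h2
        (ω := -Complex.I) (neg_ne_zero.2 Complex.I_ne_zero) (c := d) (p := -b) (q := -a)
        (by linarith)
        (fun z hz => by simpa using hz.2.2) (fun z hz => by simpa using hz.2.1)
        (fun z => by
          simp only [Set.mem_inter_iff, Complex.mem_reProdIm, Set.mem_Icc, neg_mul, Complex.neg_re,
            Complex.neg_im, Complex.I_mul_re, Complex.I_mul_im, neg_neg, neg_le_neg_iff]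
          constructor
          · rintro ⟨⟨⟨h1, h2⟩, h3, h4⟩, -, h6, h7⟩
            exact ⟨by linarith, h2, h1⟩
          · rintro ⟨h1, h2, h3⟩
            exact ⟨⟨⟨h3, h2⟩, by linarith, by linarith⟩, ⟨h3, h2⟩, by linarith, by linarith⟩)
      convert this using 1
      ext z
      simp only [Set.mem_union, Complex.mem_reProdIm, Set.mem_Icc]
      constructor
      · rintro ⟨h3, h1, h2⟩
        rcases le_total z.im d with h | h
        · exact Or.inl ⟨h3, h1, h⟩
        · exact Or.inr ⟨h3, h, h2⟩
      · rintro (⟨h3, h1, h2⟩ | ⟨h3, h1, h2⟩)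
        · exact ⟨h3, h1, by linarith⟩
        · exact ⟨h3, by linarith, h2⟩
  obtain ⟨M, hM, hKM⟩ := hK.isBounded.exists_pos_norm_le
  obtain ⟨R, hR, hlog⟩ := hall (-M) M (-M) M (by linarith) (by linarith)
  refine ⟨R, hR.mono fun z hz => hz.2, hlog.mono fun z hz => ⟨hz, ?_⟩⟩
  have hz' := hKM z hz
  exact ⟨abs_le.1 ((Complex.abs_re_le_norm z).trans hz'),
    abs_le.1 ((Complex.abs_im_le_norm z).trans hz')⟩

/-- A drawing of a multigraph in the complex plane. -/
structure ComplexDrawing (V E : Type*) where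
  pos : V → ℂ
  arc : E → ℝ → ℂ
  src : E → V
  tgt : E → V
  pos_injective : Function.Injective pos
  arc_continuousOn : ∀ e, ContinuousOn (arc e) (Set.Icc 0 1)
  arc_injOn : ∀ e, Set.InjOn (arc e) (Set.Icc 0 1)
  arc_zero : ∀ e, arc e 0 = pos (src e)
  arc_one : ∀ e, arc e 1 = pos (tgt e)
  arc_ne_pos : ∀ e, ∀ t ∈ Set.Ioo (0 : ℝ) 1, ∀ v, arc e t ≠ pos v
  arc_ne_arc : ∀ e f, e ≠ f → ∀ s ∈ Set.Ioo (0 : ℝ) 1, ∀ t ∈ Set.Ioo (0 : ℝ) 1, arc e s ≠ arc f t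

namespace ComplexDrawing

variable {V E : Type*} (D : ComplexDrawing V E)

/-- The point set covered by the vertices and the edges in `A`. -/
def carrier (A : Finset E) : Set ℂ :=
  Set.range D.pos ∪ ⋃ e ∈ A, D.arc e '' Set.Icc 0 1

theorem pos_mem_carrier (A : Finset E) (v : V) : D.pos v ∈ D.carrier A :=
  Or.inl ⟨v, rfl⟩

theorem arc_mem_carrier {A : Finset E} {e : E} (he : e ∈ A) {t : ℝ} (ht : t ∈ Set.Icc (0 : ℝ) 1) :
    D.arc e t ∈ D.carrier A :=
  Or.inr (Set.mem_biUnion (Finset.mem_coe.2 he) ⟨t, ht, rfl⟩)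

theorem carrier_mono {A B : Finset E} (h : A ⊆ B) : D.carrier A ⊆ D.carrier B :=
  Set.union_subset_union_right _ (Set.biUnion_subset_biUnion_left h)

theorem carrier_insert [DecidableEq E] (A : Finset E) (e : E) :
    D.carrier (insert e A) = D.carrier A ∪ D.arc e '' Set.Icc 0 1 := by
  simp only [carrier, Finset.set_biUnion_insert]
  rw [Set.union_comm (D.arc e '' _), Set.union_assoc]

theorem isCompact_arc (e : E) : IsCompact (D.arc e '' Set.Icc 0 1) :=
  isCompact_Icc.image_of_continuousOn (D.arc_continuousOn e)

theorem isCompact_carrier [Finite V] (A : Finset E) : IsCompact (D.carrier A) :=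
  (Set.finite_range _).isCompact.union (A.isCompact_biUnion fun e _ => D.isCompact_arc e)

/-- A point of the carrier is a vertex or lies inside an edge. -/
theorem mem_carrier_cases {A : Finset E} {z : ℂ} (hz : z ∈ D.carrier A) :
    (∃ v, z = D.pos v) ∨ ∃ e ∈ A, ∃ t ∈ Set.Ioo (0 : ℝ) 1, z = D.arc e t := by
  rcases hz with ⟨v, rfl⟩ | hz
  · exact Or.inl ⟨v, rfl⟩
  · obtain ⟨e, he, t, ht, rfl⟩ := Set.mem_iUnion₂.1 hz
    rcases eq_or_lt_of_le ht.1 with rfl | h0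
    · exact Or.inl ⟨_, D.arc_zero e⟩
    rcases eq_or_lt_of_le ht.2 with rfl | h1
    · exact Or.inl ⟨_, D.arc_one e⟩
    exact Or.inr ⟨e, he, t, ⟨h0, h1⟩, rfl⟩

theorem arc_notMem_carrier {A : Finset E} {e : E} (he : e ∉ A) {t : ℝ}
    (ht : t ∈ Set.Ioo (0 : ℝ) 1) : D.arc e t ∉ D.carrier A := by
  intro h
  rcases D.mem_carrier_cases h with ⟨v, hv⟩ | ⟨f, hf, s, hs, hst⟩
  · exact D.arc_ne_pos e t ht v hv
  · exact D.arc_ne_arc e f (fun h => he (h ▸ hf)) t ht s hs hst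

theorem src_ne_tgt (e : E) : D.src e ≠ D.tgt e := by
  intro h
  have h1 : D.arc e 0 = D.arc e 1 := by rw [D.arc_zero, D.arc_one, h]
  exact zero_ne_one (D.arc_injOn e (by simp) (by simp) h1)

/-- The points of `P` represent all components of the complement of `K`. -/
def _root_.RepresentsComponents (K P : Set ℂ) : Prop :=
  P ⊆ Kᶜ ∧ ∀ z ∉ K, ∃ p ∈ P, z ∈ connectedComponentIn Kᶜ p

/-- A drawing has finitely many faces. -/
theorem exists_finite_representatives [Finite V] (A : Finset E) :
    ∃ P : Set ℂ, P.Finite ∧ RepresentsComponents (D.carrier A) P := by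
  classical
  induction A using Finset.induction_on with
  | empty =>
    have hc : IsConnected (D.carrier ∅)ᶜ := by
      have : D.carrier ∅ = Set.range D.pos := by simp [carrier]
      rw [this]
      exact (Set.finite_range _).countable.isConnected_compl_of_one_lt_rank (by simp)
    obtain ⟨p, hp⟩ := hc.nonempty
    exact ⟨{p}, Set.finite_singleton p, by simpa using hp, fun z hz =>
      ⟨p, rfl, hc.isPreconnected.subset_connectedComponentIn hp subset_rfl hz⟩⟩
  | insert e A he ih =>
    obtain ⟨P, hPfin, hPK, hP⟩ := ih
    rw [D.carrier_insert]
    set K := D.carrier A with hK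
    set L := D.arc e '' Set.Icc 0 1 with hL
    have key : ∀ p : ℂ, ∃ Q : Set ℂ, Q.Finite ∧ Q ⊆ (K ∪ L)ᶜ ∧
        ∀ z ∉ K ∪ L, z ∈ connectedComponentIn Kᶜ p →
          ∃ q ∈ Q, z ∈ connectedComponentIn (K ∪ L)ᶜ q := by
      intro p
      by_cases h1 : ∃ x, x ∉ K ∪ L ∧ x ∈ connectedComponentIn Kᶜ p
      · obtain ⟨x, hx, hxp⟩ := h1
        by_cases h2 : ∃ y, y ∉ K ∪ L ∧ y ∈ connectedComponentIn Kᶜ p ∧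
            y ∉ connectedComponentIn (K ∪ L)ᶜ x
        · obtain ⟨y, hy, hyp, hyx⟩ := h2
          refine ⟨{x, y}, by simp, ?_, fun z hz hzp => ?_⟩
          · rintro w (rfl | rfl)
            exacts [hx, hy]
          · have := component_union_arc (D.isCompact_carrier A) (D.arc_continuousOn e)
              (D.arc_injOn e) (fun t ht => D.arc_notMem_carrier he ht)
              (by rw [D.arc_zero]; exact D.pos_mem_carrier _ _)
              (by rw [D.arc_one]; exact D.pos_mem_carrier _ _) hx hy hz
              (by rw [← connectedComponentIn_eq hxp]; exact hyp)
              (by rw [← connectedComponentIn_eq hxp]; exact hzp)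
            rcases this with h | h | h
            · exact absurd h hyx
            · exact ⟨x, by simp, h⟩
            · exact ⟨y, by simp, h⟩
        · push Not at h2
          exact ⟨{x}, by simp, by simpa using hx, fun z hz hzp => ⟨x, rfl, h2 z hz hzp⟩⟩
      · push Not at h1
        exact ⟨∅, by simp, by simp, fun z hz hzp => absurd hzp (h1 z hz)⟩
    choose Q hQfin hQK hQ using key
    refine ⟨⋃ p ∈ P, Q p, hPfin.biUnion fun p _ => hQfin p,
      Set.iUnion₂_subset fun p _ => hQK p, fun z hz => ?_⟩
    obtain ⟨p, hp, hzp⟩ := hP z fun h => hz (Or.inl h)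
    obtain ⟨q, hq, hzq⟩ := hQ p z hz hzp
    exact ⟨q, Set.mem_biUnion hp hq, hzq⟩

/-- The faces of a drawing have a finite system of distinct representatives. -/
theorem exists_distinct_representatives [Finite V] (A : Finset E) :
    ∃ P : Finset ℂ, RepresentsComponents (D.carrier A) P ∧
      ∀ p ∈ P, ∀ q ∈ P, q ∈ connectedComponentIn (D.carrier A)ᶜ p → p = q := by
  classical
  have hne : ∃ n, ∃ P : Finset ℂ, RepresentsComponents (D.carrier A) P ∧ P.card = n := by
    obtain ⟨P, hfin, hP⟩ := D.exists_finite_representatives A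
    exact ⟨_, hfin.toFinset, by simpa using hP, rfl⟩
  obtain ⟨P, hP, hcard⟩ := Nat.find_spec hne
  refine ⟨P, hP, fun p hp q hq hpq => ?_⟩
  by_contra hne'
  refine Nat.find_min hne (m := (P.erase q).card)
    (by rw [← hcard]; exact Finset.card_erase_lt_of_mem hq) ⟨P.erase q, ⟨?_, ?_⟩, rfl⟩
  · exact fun x hx => hP.1 (Finset.mem_of_mem_erase hx)
  · intro z hz
    obtain ⟨r, hr, hzr⟩ := hP.2 z hz
    by_cases hrq : r = q
    · subst hrq
      exact ⟨p, by simp [hp, hne'], by rw [connectedComponentIn_eq hpq]; exact hzr⟩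
    · exact ⟨r, by simpa [hrq] using hr, hzr⟩

end ComplexDrawing

/-- Up to exponentials, the zeros and poles of a rational function can be moved to representatives
of the components. -/
theorem RationalWith.exists_exponents {K : Set ℂ} (hK : IsCompact K) {P : Finset ℂ}
    (hP : RepresentsComponents K P) {R : ℂ → ℂ} (hR : RationalWith Kᶜ R) :
    ∃ n : ℂ → ℤ, HasLogOn K fun z => R z / ∏ p ∈ P, (z - p) ^ n p := by
  classical
  have hne : ∀ p ∈ P, ∀ z ∈ K, z - p ≠ 0 := fun p hp z hz h => hP.1 hp (sub_eq_zero.1 h ▸ hz)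
  induction hR with
  | one => exact ⟨0, by simpa using HasLogOn.const K one_ne_zero⟩
  | sub a ha =>
    obtain ⟨p, hp, hap⟩ := hP.2 a ha
    refine ⟨Pi.single p 1, (HasLogOn.of_mem_component hK (mem_component_comm hap)).congr
      fun z _ => ?_⟩
    congr 1
    rw [Finset.prod_eq_single p (fun q _ hq => by simp [hq]) (fun h => absurd hp h)]
    simp
  | mul _ _ ih₁ ih₂ =>
    obtain ⟨n, hn⟩ := ih₁
    obtain ⟨m, hm⟩ := ih₂
    refine ⟨n + m, (hn.mul hm).congr fun z hz => ?_⟩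
    rw [div_mul_div_comm, ← Finset.prod_mul_distrib]
    congr 1
    exact Finset.prod_congr rfl fun p hp => by rw [Pi.add_apply, zpow_add₀ (hne p hp z hz)]
  | inv _ ih =>
    obtain ⟨n, hn⟩ := ih
    refine ⟨-n, hn.inv.congr fun z hz => ?_⟩
    simp [zpow_neg, div_eq_mul_inv, mul_comm]

namespace ComplexDrawing

variable {V E : Type*} (D : ComplexDrawing V E)

/-- A function winding once around the edge `e` and constant elsewhere. -/
theorem exists_winding_function [Finite V] [Fintype E] (e : E) :
    ∃ φ : ℂ → ℂ, ContinuousOn φ (D.carrier Finset.univ) ∧ (∀ z, φ z ≠ 0) ∧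
      (∀ v, φ (D.pos v) = 1) ∧
      (∀ t ∈ Set.Icc (0 : ℝ) 1, φ (D.arc e t) = Complex.exp (t * (2 * Real.pi * Complex.I))) ∧
      ∀ f, f ≠ e → ∀ t ∈ Set.Icc (0 : ℝ) 1, φ (D.arc f t) = 1 := by
  classical
  obtain ⟨τ, hτ, hl⟩ := exists_continuousOn_arc_inverse (D.arc_continuousOn e) (D.arc_injOn e)
  set L := D.arc e '' Set.Icc 0 1 with hL
  set φ : ℂ → ℂ := fun z => if z ∈ L then Complex.exp (τ z * (2 * Real.pi * Complex.I)) else 1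
    with hφ
  have harc : ∀ t ∈ Set.Icc (0 : ℝ) 1,
      φ (D.arc e t) = Complex.exp (t * (2 * Real.pi * Complex.I)) := by
    intro t ht
    have : D.arc e t ∈ L := ⟨t, ht, rfl⟩
    simp only [hφ, if_pos this, hl t ht]
  have hpos : ∀ v, φ (D.pos v) = 1 := by
    intro v
    by_cases hv : D.pos v ∈ L
    · obtain ⟨t, ht, htv⟩ := hv
      rw [← htv, harc t ht]
      rcases eq_or_lt_of_le ht.1 with rfl | h0
      · simp
      rcases eq_or_lt_of_le ht.2 with rfl | h1
      · simp
      exact absurd htv (D.arc_ne_pos e t ⟨h0, h1⟩ v)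
    · simp [hφ, hv]
  have hother : ∀ z ∈ D.carrier (Finset.univ.erase e), φ z = 1 := by
    intro z hz
    rcases D.mem_carrier_cases hz with ⟨v, rfl⟩ | ⟨f, hf, t, ht, rfl⟩
    · exact hpos v
    · have : D.arc f t ∉ L := by
        intro h
        refine D.arc_notMem_carrier (A := {e}) (e := f) ?_ ht ?_
        · simpa using hf
        · obtain ⟨s, hs, hst⟩ := h
          rw [← hst]
          exact D.arc_mem_carrier (by simp) hs
      simp [hφ, this]
  refine ⟨φ, ?_, ?_, hpos, harc, ?_⟩
  · have : D.carrier Finset.univ = D.carrier (Finset.univ.erase e) ∪ L := by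
      rw [hL, ← D.carrier_insert, Finset.insert_erase (Finset.mem_univ e)]
    rw [this]
    refine ContinuousOn.union_of_isClosed (continuousOn_const.congr hother) ?_
      (D.isCompact_carrier _).isClosed (D.isCompact_arc e).isClosed
    have hc : ContinuousOn (fun z => Complex.exp (τ z * (2 * Real.pi * Complex.I))) L :=
      Complex.continuous_exp.comp_continuousOn
        ((Complex.continuous_ofReal.comp_continuousOn hτ).mul continuousOn_const)
    exact hc.congr fun z hz => if_pos hz
  · intro z
    simp only [hφ]
    split_ifs
    · exact Complex.exp_ne_zero _
    · exact one_ne_zero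
  · intro f hf t ht
    exact hother _ (D.arc_mem_carrier (by simpa using hf) ht)

/-- Half of Euler's formula: the number of edges is less than the number of vertices plus the
number of faces. -/
theorem card_edges_lt [Fintype V] [Nonempty V] [Fintype E] {P : Finset ℂ}
    (hP : RepresentsComponents (D.carrier Finset.univ) P) :
    Fintype.card E < P.card + Fintype.card V := by
  classical
  set K := D.carrier Finset.univ with hK
  have hKc : IsCompact K := D.isCompact_carrier _
  have hne : ∀ p ∈ P, ∀ z ∈ K, z - p ≠ 0 := fun p hp z hz h => hP.1 hp (sub_eq_zero.1 h ▸ hz)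
  choose φ hφc hφ0 hφpos hφarc hφother using D.exists_winding_function
  have hexp : ∀ e, ∃ n : ℂ → ℤ, HasLogOn K fun z => φ e z / ∏ p ∈ P, (z - p) ^ n p := by
    intro e
    obtain ⟨R, hR, hlog⟩ := exists_rational_hasLogOn hKc (hφc e) fun z _ => hφ0 e z
    obtain ⟨n, hn⟩ := hR.exists_exponents hKc hP
    refine ⟨n, (hlog.mul hn).congr fun z hz => ?_⟩
    rw [div_mul_div_cancel₀ (hR.ne_zero fun h => h hz)]
  choose n hn using hexp
  let ψ : (E → ℤ) →ₗ[ℤ] (P → ℤ) :=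
    LinearMap.pi fun p => ∑ e, n e p • LinearMap.proj (R := ℤ) (φ := fun _ : E => ℤ) e
  let d : (V → ℤ) →ₗ[ℤ] (E → ℤ) :=
    LinearMap.pi fun e => LinearMap.proj (R := ℤ) (φ := fun _ : V => ℤ) (D.tgt e) -
      LinearMap.proj (R := ℤ) (φ := fun _ : V => ℤ) (D.src e)
  have hker : LinearMap.ker ψ ≤ LinearMap.range d := by
    intro c hc
    have hc' : ∀ p ∈ P, ∑ e, n e p * c e = 0 := by
      intro p hp
      have := congrFun (LinearMap.mem_ker.1 hc) ⟨p, hp⟩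
      simpa [ψ] using this
    obtain ⟨g, hg, hge⟩ : HasLogOn K fun z => ∏ e, φ e z ^ c e := by
      refine (HasLogOn.prod Finset.univ fun e _ => (hn e).zpow (c e)).congr fun z hz => ?_
      simp only [div_zpow, Finset.prod_div_distrib, ← Finset.prod_zpow]
      rw [Finset.prod_comm]
      have : ∏ p ∈ P, ∏ e, ((z - p) ^ n e p) ^ c e = 1 := by
        refine Finset.prod_eq_one fun p hp => ?_
        have : ∏ e, ((z - p) ^ n e p) ^ c e = (z - p) ^ ∑ e, n e p * c e := by
          simp only [← zpow_mul]
          induction (Finset.univ : Finset E) using Finset.induction_on with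
          | empty => simp
          | insert e s he ih =>
            rw [Finset.prod_insert he, Finset.sum_insert he, zpow_add₀ (hne p hp z hz), ih]
        rw [this, hc' p hp, zpow_zero]
      rw [this, div_one]
    have hvert : ∀ v, ∃ m : ℤ, g (D.pos v) = m * (2 * Real.pi * Complex.I) := by
      intro v
      have h1 := hge _ (D.pos_mem_carrier _ v)
      simp only [hφpos, one_zpow, Finset.prod_const_one] at h1
      exact Complex.exp_eq_one_iff.1 h1.symm
    choose m hm using hvert
    refine ⟨m, funext fun e => ?_⟩
    have hconst := exp_eq_exp_sub_const (K := Set.Icc (0 : ℝ) 1) isPreconnected_Icc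
      (g := fun t => g (D.arc e t)) (h := fun t => c e * (t * (2 * Real.pi * Complex.I)))
      (hg.comp (D.arc_continuousOn e) fun t ht => D.arc_mem_carrier (Finset.mem_univ e) ht)
      (by fun_prop) (fun t ht => by
        rw [← hge _ (D.arc_mem_carrier (Finset.mem_univ e) ht), Complex.exp_int_mul,
          ← hφarc e t ht]
        refine Finset.prod_eq_single e (fun f _ hf => ?_) (fun h => absurd (Finset.mem_univ e) h)
        rw [hφother f e (Ne.symm hf) t ht, one_zpow]) (x := 1) (y := 0) (by simp) (by simp)
    simp only [D.arc_zero, D.arc_one, hm] at hconst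
    have h2 : ((m (D.tgt e) - m (D.src e) : ℤ) : ℂ) * (2 * Real.pi * Complex.I) =
        (c e : ℂ) * (2 * Real.pi * Complex.I) := by
      push_cast at hconst ⊢
      linear_combination hconst
    have h3 := mul_right_cancel₀ Complex.two_pi_I_ne_zero h2
    simpa [d] using (by exact_mod_cast h3 : m (D.tgt e) - m (D.src e) = c e)
  have h1 := (LinearMap.ker ψ).finrank_quotient_add_finrank
  have h2 := (LinearMap.ker d).finrank_quotient_add_finrank
  rw [ψ.quotKerEquivRange.finrank_eq] at h1
  rw [d.quotKerEquivRange.finrank_eq] at h2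
  have h3 := Submodule.finrank_mono hker
  have h4 : Module.finrank ℤ (LinearMap.range ψ) ≤ P.card := by
    refine (Submodule.finrank_le _).trans ?_
    simp
  have h5 : 0 < Module.finrank ℤ (LinearMap.ker d) := by
    have hmem : (fun _ => 1 : V → ℤ) ∈ LinearMap.ker d := by
      rw [LinearMap.mem_ker]
      ext e
      simp [d]
    have : Nontrivial (LinearMap.ker d) := by
      refine ⟨⟨⟨_, hmem⟩, 0, fun h => ?_⟩⟩
      obtain ⟨v⟩ := ‹Nonempty V›
      have := congrFun (congrArg Subtype.val h) v
      simp at this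
    exact Module.finrank_pos
  simp only [Module.finrank_fintype_fun_eq_card] at h1 h2
  omega

end ComplexDrawing

namespace ComplexDrawing

variable {V E : Type*} (D : ComplexDrawing V E)

/-- The unordered pair of ends of an edge. -/
def ends (e : E) : Sym2 V := s(D.src e, D.tgt e)

/-- The simple graph spanned by a set of edges of a drawing. -/
def graph (A : Finset E) : SimpleGraph V := SimpleGraph.fromEdgeSet (D.ends '' A)

theorem graph_mono {A B : Finset E} (h : A ⊆ B) : D.graph A ≤ D.graph B :=
  SimpleGraph.fromEdgeSet_mono (Set.image_mono (by exact_mod_cast h))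

theorem graph_adj {A : Finset E} {e : E} (he : e ∈ A) : (D.graph A).Adj (D.src e) (D.tgt e) := by
  rw [graph, SimpleGraph.fromEdgeSet_adj]
  exact ⟨⟨e, he, rfl⟩, D.src_ne_tgt e⟩

/-- On a forest, every integer edge function is the difference of a vertex potential. -/
theorem exists_potential (hD : Function.Injective D.ends) {A : Finset E}
    (hA : (D.graph A).IsAcyclic) (c : E → ℤ) :
    ∃ m : V → ℤ, ∀ e ∈ A, m (D.tgt e) - m (D.src e) = c e := by
  classical
  induction A using Finset.induction_on with
  | empty => exact ⟨0, by simp⟩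
  | insert e A he ih =>
    obtain ⟨m, hm⟩ := ih (hA.anti (D.graph_mono (Finset.subset_insert e A)))
    have hbridge := SimpleGraph.isAcyclic_iff_forall_adj_isBridge.1 hA
      (D.graph_adj (Finset.mem_insert_self e A))
    rw [SimpleGraph.isBridge_iff] at hbridge
    have hle : D.graph A ≤
        (D.graph (insert e A)).deleteEdges {s(D.src e, D.tgt e)} := by
      intro u v huv
      rw [SimpleGraph.deleteEdges_adj]
      refine ⟨D.graph_mono (Finset.subset_insert e A) huv, fun h => ?_⟩
      rw [graph, SimpleGraph.fromEdgeSet_adj] at huv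
      obtain ⟨⟨f, hf, hfe⟩, -⟩ := huv
      have : f = e := hD (hfe.trans h)
      exact he (this ▸ hf)
    have hnr : ¬ (D.graph A).Reachable (D.tgt e) (D.src e) := fun h => hbridge (h.symm.mono hle)
    refine ⟨fun v => m v + if (D.graph A).Reachable (D.tgt e) v then
      c e - (m (D.tgt e) - m (D.src e)) else 0, fun f hf => ?_⟩
    rcases Finset.mem_insert.1 hf with rfl | hf
    · simp [hnr]
      ring
    · have hiff : (D.graph A).Reachable (D.tgt e) (D.tgt f) ↔
          (D.graph A).Reachable (D.tgt e) (D.src f) :=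
        ⟨fun h => h.trans (D.graph_adj hf).symm.reachable,
          fun h => h.trans (D.graph_adj hf).reachable⟩
      simp only [hiff]
      rw [← hm f hf]
      ring

/-- Logarithms along the edges which agree at the vertices can be glued. -/
theorem exists_log_of_edge_logs [Finite V] {A : Finset E} {φ : ℂ → ℂ} {l : V → ℂ}
    (hl : ∀ v, φ (D.pos v) = Complex.exp (l v)) {h : E → ℂ → ℂ}
    (hc : ∀ e ∈ A, ContinuousOn (h e) (D.arc e '' Set.Icc 0 1))
    (hφ : ∀ e ∈ A, ∀ z ∈ D.arc e '' Set.Icc 0 1, φ z = Complex.exp (h e z))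
    (h0 : ∀ e ∈ A, h e (D.pos (D.src e)) = l (D.src e))
    (h1 : ∀ e ∈ A, h e (D.pos (D.tgt e)) = l (D.tgt e)) :
    ∃ g : ℂ → ℂ, ContinuousOn g (D.carrier A) ∧ (∀ z ∈ D.carrier A, φ z = Complex.exp (g z)) ∧
      ∀ v, g (D.pos v) = l v := by
  classical
  induction A using Finset.induction_on with
  | empty =>
    refine ⟨Function.extend D.pos l 0, ?_, ?_, D.pos_injective.extend_apply _ _⟩
    · have : D.carrier ∅ = Set.range D.pos := by simp [carrier]
      rw [this]
      exact (Set.finite_range _).continuousOn _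
    · intro z hz
      rcases D.mem_carrier_cases hz with ⟨v, rfl⟩ | ⟨e, he, -⟩
      · rw [D.pos_injective.extend_apply, hl]
      · simp at he
  | insert e A he ih =>
    obtain ⟨g, hg, hgφ, hgl⟩ := ih (fun f hf => hc f (by simp [hf]))
      (fun f hf => hφ f (by simp [hf]))
      (fun f hf => h0 f (by simp [hf])) (fun f hf => h1 f (by simp [hf]))
    have heA : e ∈ insert e A := Finset.mem_insert_self e A
    set K := D.carrier A with hK
    set L := D.arc e '' Set.Icc 0 1 with hL
    have e1 : ∀ z ∈ K, K.piecewise g (h e) z = g z := fun z hz => by simp [hz]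
    have e2 : ∀ z ∈ L, K.piecewise g (h e) z = h e z := by
      rintro z ⟨t, ht, rfl⟩
      by_cases hzK : D.arc e t ∈ K
      · rw [e1 _ hzK]
        rcases eq_or_lt_of_le ht.1 with rfl | ht0
        · rw [D.arc_zero, hgl, h0 e heA]
        rcases eq_or_lt_of_le ht.2 with rfl | ht1
        · rw [D.arc_one, hgl, h1 e heA]
        exact absurd hzK (D.arc_notMem_carrier he ⟨ht0, ht1⟩)
      · simp [hzK]
    refine ⟨K.piecewise g (h e), ?_, ?_, fun v => ?_⟩
    · rw [D.carrier_insert]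
      exact (hg.congr e1).union_of_isClosed ((hc e heA).congr e2)
        (D.isCompact_carrier A).isClosed (D.isCompact_arc e).isClosed
    · rw [D.carrier_insert]
      rintro z (hz | hz)
      · rw [e1 z hz, hgφ z hz]
      · rw [e2 z hz, hφ e heA z hz]
    · rw [e1 _ (D.pos_mem_carrier A v), hgl]

/-- A drawn forest does not separate the plane. -/
theorem mem_component_of_isAcyclic [Finite V] (hD : Function.Injective D.ends) {A : Finset E}
    (hA : (D.graph A).IsAcyclic) {a b : ℂ} (ha : a ∉ D.carrier A) (hb : b ∉ D.carrier A) :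
    b ∈ connectedComponentIn (D.carrier A)ᶜ a := by
  classical
  have hK := D.isCompact_carrier A
  refine mem_component_of_hasLogOn hK ha hb ?_
  set φ : ℂ → ℂ := fun z => (z - a) / (z - b) with hφ
  have hna : ∀ z ∈ D.carrier A, z - a ≠ 0 := fun z hz h => ha (sub_eq_zero.1 h ▸ hz)
  have hnb : ∀ z ∈ D.carrier A, z - b ≠ 0 := fun z hz h => hb (sub_eq_zero.1 h ▸ hz)
  have hφ0 : ∀ z ∈ D.carrier A, φ z ≠ 0 := fun z hz => div_ne_zero (hna z hz) (hnb z hz)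
  have hφc : ContinuousOn φ (D.carrier A) :=
    (continuousOn_id.sub continuousOn_const).div (continuousOn_id.sub continuousOn_const) hnb
  have hex : ∀ e, ∃ h : ℂ → ℂ, e ∈ A → ContinuousOn h (D.arc e '' Set.Icc 0 1) ∧
      ∀ z ∈ D.arc e '' Set.Icc 0 1, φ z = Complex.exp (h z) := by
    intro e
    by_cases he : e ∈ A
    · have hsub : D.arc e '' Set.Icc 0 1 ⊆ D.carrier A := by
        rintro _ ⟨t, ht, rfl⟩
        exact D.arc_mem_carrier he ht
      obtain ⟨h, hc, hh⟩ := HasLogOn.arc (D.arc_continuousOn e) (D.arc_injOn e) (hφc.mono hsub)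
        fun z hz => hφ0 z (hsub hz)
      exact ⟨h, fun _ => ⟨hc, hh⟩⟩
    · exact ⟨0, fun h => absurd h he⟩
  choose h hh using hex
  have hsrc : ∀ e, D.pos (D.src e) ∈ D.arc e '' Set.Icc 0 1 := fun e => ⟨0, by simp, D.arc_zero e⟩
  have htgt : ∀ e, D.pos (D.tgt e) ∈ D.arc e '' Set.Icc 0 1 := fun e => ⟨1, by simp, D.arc_one e⟩
  set l := fun v => Complex.log (φ (D.pos v)) with hl
  have hle : ∀ v, φ (D.pos v) = Complex.exp (l v) :=
    fun v => (Complex.exp_log (hφ0 _ (D.pos_mem_carrier A v))).symm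
  have hmult : ∀ e, ∃ c : ℤ, e ∈ A → h e (D.pos (D.tgt e)) - l (D.tgt e) =
      h e (D.pos (D.src e)) - l (D.src e) + c * (2 * Real.pi * Complex.I) := by
    intro e
    by_cases he : e ∈ A
    · have h1 := ((hh e he).2 _ (htgt e)).symm.trans (hle _)
      have h2 := ((hh e he).2 _ (hsrc e)).symm.trans (hle _)
      obtain ⟨c1, hc1⟩ := Complex.exp_eq_exp_iff_exists_int.1 h1
      obtain ⟨c2, hc2⟩ := Complex.exp_eq_exp_iff_exists_int.1 h2
      exact ⟨c1 - c2, fun _ => by rw [hc1, hc2]; push_cast; ring⟩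
    · exact ⟨0, fun h => absurd h he⟩
  choose c hc using hmult
  obtain ⟨m, hm⟩ := D.exists_potential hD hA c
  obtain ⟨g, hg, hgφ, -⟩ := D.exists_log_of_edge_logs (A := A) (φ := φ)
    (l := fun v => l v + m v * (2 * Real.pi * Complex.I))
    (h := fun e z => h e z + (l (D.src e) + m (D.src e) * (2 * Real.pi * Complex.I) -
      h e (D.pos (D.src e))))
    (fun v => by rw [Complex.exp_add, Complex.exp_int_mul_two_pi_mul_I, mul_one, hle])
    (fun e he => (hh e he).1.add continuousOn_const)
    (fun e he z hz => by
      have h2 := ((hh e he).2 _ (hsrc e)).symm.trans (hle _)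
      rw [Complex.exp_add, Complex.exp_sub, Complex.exp_add, Complex.exp_int_mul_two_pi_mul_I,
        mul_one, h2, div_self (Complex.exp_ne_zero _), mul_one, (hh e he).2 z hz])
    (fun e he => by ring)
    (fun e he => by
      have := hc e he
      rw [← hm e he] at this
      push_cast at this
      linear_combination this)
  exact ⟨g, hg, hgφ⟩

/-- If a drawing has another face, then the edges bordering a face contain a cycle. -/
theorem not_isAcyclic_of_border [Finite V] [Fintype E] (hD : Function.Injective D.ends) {p q : ℂ}
    (hp : p ∉ D.carrier Finset.univ) (hq : q ∉ D.carrier Finset.univ)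
    (hpq : q ∉ connectedComponentIn (D.carrier Finset.univ)ᶜ p) {A : Finset E}
    (hA : ∀ e, ∀ t ∈ Set.Ioo (0 : ℝ) 1,
      D.arc e t ∈ closure (connectedComponentIn (D.carrier Finset.univ)ᶜ p) → e ∈ A) :
    ¬ (D.graph A).IsAcyclic := by
  intro hacyc
  have hK := D.isCompact_carrier Finset.univ
  set U := connectedComponentIn (D.carrier Finset.univ)ᶜ p with hU
  have hsub : D.carrier A ⊆ D.carrier Finset.univ := D.carrier_mono (Finset.subset_univ A)
  have hp' : p ∉ D.carrier A := fun h => hp (hsub h)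
  have hq' : q ∉ D.carrier A := fun h => hq (hsub h)
  have hconn := isPreconnected_connectedComponentIn (x := p) (F := (D.carrier A)ᶜ)
  have hWU : connectedComponentIn (D.carrier A)ᶜ p ⊆ U := by
    refine hconn.subset_of_closure_inter_subset (isOpen_component hK p)
      ⟨p, mem_connectedComponentIn hp', mem_connectedComponentIn hp⟩ ?_
    rintro x ⟨hxU, hxW⟩
    rcases closure_component_subset hK p hxU with h | h
    · exact h
    · exfalso
      have hxA := connectedComponentIn_subset _ _ hxW
      rcases D.mem_carrier_cases h with ⟨v, rfl⟩ | ⟨e, -, t, ht, rfl⟩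
      · exact hxA (D.pos_mem_carrier A v)
      · exact hxA (D.arc_mem_carrier (hA e t ht hxU) (Set.Ioo_subset_Icc_self ht))
  exact hpq (hWU (D.mem_component_of_isAcyclic hD hacyc hp' hq'))

/-- A face bordering `e` lies in the component of `e` after deleting `e`. -/
theorem mem_component_erase [Finite V] [Fintype E] [DecidableEq E] {p : ℂ}
    (hp : p ∉ D.carrier Finset.univ) {e : E} {t : ℝ} (ht : t ∈ Set.Ioo (0 : ℝ) 1)
    (het : D.arc e t ∈ closure (connectedComponentIn (D.carrier Finset.univ)ᶜ p)) :
    p ∈ connectedComponentIn (D.carrier (Finset.univ.erase e))ᶜ (D.arc e (1 / 2)) := by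
  set K := D.carrier (Finset.univ.erase e) with hK
  have hKU : K ⊆ D.carrier Finset.univ := D.carrier_mono (Finset.subset_univ _)
  have hsub : connectedComponentIn (D.carrier Finset.univ)ᶜ p ⊆ connectedComponentIn Kᶜ p :=
    connectedComponentIn_mono p (Set.compl_subset_compl.2 hKU)
  have hnot : ∀ s ∈ Set.Ioo (0 : ℝ) 1, D.arc e s ∉ K :=
    fun s hs => D.arc_notMem_carrier (Finset.notMem_erase e _) hs
  have h1 : D.arc e t ∈ connectedComponentIn Kᶜ p :=
    (closure_component_subset (D.isCompact_carrier _) p (closure_mono hsub het)).resolve_right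
      (hnot t ht)
  have h2 : IsPreconnected (D.arc e '' Set.Ioo 0 1) :=
    isPreconnected_Ioo.image _ ((D.arc_continuousOn e).mono Set.Ioo_subset_Icc_self)
  have hhalf : (1 / 2 : ℝ) ∈ Set.Ioo (0 : ℝ) 1 := by norm_num
  have h3 : D.arc e t ∈ connectedComponentIn Kᶜ (D.arc e (1 / 2)) := by
    refine h2.subset_connectedComponentIn ⟨_, hhalf, rfl⟩ ?_ ⟨t, ht, rfl⟩
    rintro _ ⟨s, hs, rfl⟩
    exact hnot s hs
  rw [connectedComponentIn_eq h3, ← connectedComponentIn_eq h1]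
  exact mem_connectedComponentIn fun h => hp (hKU h)

/-- Among three faces bordering an edge, two coincide. -/
theorem mem_component_of_border [Finite V] [Fintype E] {p : Fin 3 → ℂ}
    (hp : ∀ i, p i ∉ D.carrier Finset.univ) {e : E}
    (he : ∀ i, ∃ t ∈ Set.Ioo (0 : ℝ) 1,
      D.arc e t ∈ closure (connectedComponentIn (D.carrier Finset.univ)ᶜ (p i))) :
    ∃ i j, i ≠ j ∧ p j ∈ connectedComponentIn (D.carrier Finset.univ)ᶜ (p i) := by
  classical
  have hcar : D.carrier Finset.univ =
      D.carrier (Finset.univ.erase e) ∪ D.arc e '' Set.Icc 0 1 := by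
    rw [← D.carrier_insert, Finset.insert_erase (Finset.mem_univ e)]
  have hmem : ∀ i, p i ∈
      connectedComponentIn (D.carrier (Finset.univ.erase e))ᶜ (D.arc e (1 / 2)) := by
    intro i
    obtain ⟨t, ht, h⟩ := he i
    exact D.mem_component_erase (hp i) ht h
  have h := component_union_arc (D.isCompact_carrier (Finset.univ.erase e))
    (D.arc_continuousOn e) (D.arc_injOn e)
    (fun t ht => D.arc_notMem_carrier (Finset.notMem_erase e _) ht)
    (by rw [D.arc_zero]; exact D.pos_mem_carrier _ _)
    (by rw [D.arc_one]; exact D.pos_mem_carrier _ _)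
    (a := p 0) (b := p 1) (c := p 2) (hcar ▸ hp 0) (hcar ▸ hp 1) (hcar ▸ hp 2)
    (by rw [← connectedComponentIn_eq (hmem 0)]; exact hmem 1)
    (by rw [← connectedComponentIn_eq (hmem 0)]; exact hmem 2)
  rw [← hcar] at h
  rcases h with h | h | h
  exacts [⟨0, 1, by decide, h⟩, ⟨0, 2, by decide, h⟩, ⟨1, 2, by decide, h⟩]

/-- A drawing whose cycles have length at least seven is sparse. -/
theorem five_mul_card_edges_lt [Fintype V] [Nonempty V] [Fintype E]
    (hD : Function.Injective D.ends)
    (hcyc : ∀ v, ∀ w : (D.graph Finset.univ).Walk v v, w.IsCycle → 7 ≤ w.length) :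
    5 * Fintype.card E < 7 * Fintype.card V := by
  classical
  obtain ⟨P, hP, hPd⟩ := D.exists_distinct_representatives Finset.univ
  have heuler := D.card_edges_lt hP
  have hVpos : 0 < Fintype.card V := Fintype.card_pos
  by_cases hP1 : P.card ≤ 1
  · omega
  let r : ℂ → E → Prop := fun p e => ∃ t ∈ Set.Ioo (0 : ℝ) 1,
    D.arc e t ∈ closure (connectedComponentIn (D.carrier Finset.univ)ᶜ p)
  have hlow : ∀ p ∈ P, 7 ≤ (Finset.univ.bipartiteAbove r p).card := by
    intro p hp
    obtain ⟨q, hq, hqp⟩ := Finset.exists_mem_ne (by omega : 1 < P.card) p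
    set A := Finset.univ.bipartiteAbove r p with hA
    have hnot : ¬ (D.graph A).IsAcyclic := by
      refine D.not_isAcyclic_of_border hD (hP.1 hp) (hP.1 hq)
        (fun h => hqp (hPd p hp q hq h).symm) fun e t ht h => ?_
      simp only [hA, Finset.bipartiteAbove, Finset.mem_filter, Finset.mem_univ, true_and]
      exact ⟨t, ht, h⟩
    simp only [SimpleGraph.IsAcyclic, not_forall, not_not] at hnot
    obtain ⟨v, w, hw⟩ := hnot
    have hlen := hcyc v (w.mapLe (D.graph_mono (Finset.subset_univ A))) (hw.mapLe _)
    rw [SimpleGraph.Walk.length_map] at hlen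
    have hsub : w.edges.toFinset ⊆ A.image D.ends := by
      intro x hx
      have := w.edges_subset_edgeSet (List.mem_toFinset.1 hx)
      rw [graph, SimpleGraph.edgeSet_fromEdgeSet] at this
      obtain ⟨e, he, rfl⟩ := this.1
      exact Finset.mem_image_of_mem _ he
    have h1 := (Finset.card_le_card hsub).trans Finset.card_image_le
    rw [List.toFinset_card_of_nodup hw.edges_nodup, SimpleGraph.Walk.length_edges] at h1
    omega
  have hup : ∀ e ∈ (Finset.univ : Finset E), (P.bipartiteBelow r e).card ≤ 2 := by
    intro e _
    by_contra! hlt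
    obtain ⟨a, ha, b, hb, c, hc, hab, hac, hbc⟩ := Finset.two_lt_card.1 hlt
    simp only [Finset.bipartiteBelow, Finset.mem_filter] at ha hb hc
    have hmemP : ∀ i, ![a, b, c] i ∈ P := by
      intro i
      fin_cases i
      exacts [ha.1, hb.1, hc.1]
    obtain ⟨i, j, hij, h⟩ := D.mem_component_of_border (p := ![a, b, c]) (e := e)
      (fun i => hP.1 (hmemP i)) (fun i => by
        fin_cases i
        exacts [ha.2, hb.2, hc.2])
    have := hPd _ (hmemP i) _ (hmemP j) h
    fin_cases i <;> fin_cases j <;> simp_all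
  have h1 := Finset.card_nsmul_le_sum P _ 7 hlow
  have h2 := Finset.sum_le_card_nsmul (Finset.univ : Finset E) _ 2 hup
  rw [Finset.sum_card_bipartiteAbove_eq_sum_card_bipartiteBelow] at h1
  have h3 : P.card * 7 ≤ Fintype.card E * 2 := by simpa using h1.trans h2
  omega

end ComplexDrawing

/-- The drawing of an induced subgraph obtained from a plane embedding. -/
theorem PlaneEmbedding.exists_complexDrawing {V : Type*} {G : SimpleGraph V} (P : PlaneEmbedding G)
    (S : Set V) :
    ∃ D : ComplexDrawing S (G.induce S).edgeSet, ∀ e, D.ends e = e := by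
  have hmem : ∀ e : (G.induce S).edgeSet, Sym2.map Subtype.val (e : Sym2 S) ∈ G.edgeSet := by
    rintro ⟨⟨u, v⟩, h⟩
    exact h
  let ε : (G.induce S).edgeSet → G.edgeSet := fun e => ⟨Sym2.map Subtype.val (e : Sym2 S), hmem e⟩
  have hε : Function.Injective ε := fun e f h =>
    Subtype.ext (Sym2.map.injective Subtype.val_injective (congrArg Subtype.val h))
  have hends : ∀ e : (G.induce S).edgeSet, ∃ u v : S, (e : Sym2 S) = s(u, v) ∧
      P.arc (ε e) 0 = P.pos u ∧ P.arc (ε e) 1 = P.pos v := by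
    intro e
    obtain ⟨u, v, huv, h0, h1⟩ := P.arc_ends (ε e)
    have hu : u ∈ (ε e : Sym2 V) := by rw [huv]; exact Sym2.mem_mk_left u v
    have hv : v ∈ (ε e : Sym2 V) := by rw [huv]; exact Sym2.mem_mk_right u v
    obtain ⟨u', -, rfl⟩ := Sym2.mem_map.1 hu
    obtain ⟨v', -, rfl⟩ := Sym2.mem_map.1 hv
    exact ⟨u', v', Sym2.map.injective Subtype.val_injective huv, h0, h1⟩
  choose src tgt hst h0 h1 using hends
  let ψ := Complex.equivRealProdCLM.symm
  exact ⟨{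
    pos := fun v => ψ (P.pos v)
    arc := fun e t => ψ (P.arc (ε e) t)
    src := src
    tgt := tgt
    pos_injective := ψ.injective.comp (P.inj.comp Subtype.val_injective)
    arc_continuousOn := fun e => ψ.continuous.comp_continuousOn (P.arc_cont (ε e))
    arc_injOn := fun e => ψ.injective.comp_injOn (P.arc_inj (ε e))
    arc_zero := fun e => congrArg ψ (h0 e)
    arc_one := fun e => congrArg ψ (h1 e)
    arc_ne_pos := fun e t ht v h => P.arc_avoid (ε e) t ht ⟨v, (ψ.injective h).symm⟩
    arc_ne_arc := fun e f hef s hs t ht h =>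
      P.arc_disjoint (ε e) (ε f) (fun h' => hef (hε h')) s hs t ht (ψ.injective h) },
    fun e => (hst e).symm⟩

/-- Induced subgraphs of planar graphs of girth at least seven have average degree less than
`14 / 5`. -/
theorem SimpleGraph.IsPlanar.five_mul_sum_degree_lt {V : Type*} [DecidableEq V] {G : SimpleGraph V}
    [DecidableRel G.Adj] (hG : G.IsPlanar) (hgirth : (7 : ℕ∞) ≤ G.egirth) {S : Finset V}
    (hS : S.Nonempty) : 5 * ∑ v ∈ S, (S.filter (G.Adj v)).card < 14 * S.card := by
  classical
  obtain ⟨P⟩ := hG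
  obtain ⟨D, hD⟩ := P.exists_complexDrawing (S : Set V)
  have : Nonempty (S : Set V) := hS.coe_sort
  have hinj : Function.Injective D.ends := fun e f h => by
    rw [hD, hD] at h
    exact Subtype.ext h
  have hle : D.graph Finset.univ ≤ G.induce (S : Set V) := by
    intro u v huv
    rw [ComplexDrawing.graph, SimpleGraph.fromEdgeSet_adj] at huv
    obtain ⟨⟨e, -, he⟩, -⟩ := huv
    rw [hD] at he
    have := e.2
    rwa [he] at this
  have h5 := D.five_mul_card_edges_lt hinj fun v w hw => by
    have h1 := (hw.mapLe hle).map (f := (SimpleGraph.Embedding.induce (S : Set V)).toHom)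
      (SimpleGraph.Embedding.induce (G := G) (S : Set V)).injective
    have h2 := hgirth.trans (SimpleGraph.egirth_le_length h1)
    rw [SimpleGraph.Walk.length_map, SimpleGraph.Walk.length_map] at h2
    exact_mod_cast h2
  have hsum := (G.induce (S : Set V)).sum_degrees_eq_twice_card_edges
  have hdeg : ∀ v : (S : Set V), (G.induce (S : Set V)).degree v =
      (S.filter (G.Adj v)).card := by
    intro v
    rw [← SimpleGraph.card_neighborFinset_eq_degree, ← Finset.card_map ⟨_, Subtype.val_injective⟩]
    congr 1
    ext w
    simp
    tauto
  rw [SimpleGraph.edgeFinset_card] at hsum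
  have hsum' : ∑ v ∈ S, (S.filter (G.Adj v)).card =
      2 * Fintype.card (G.induce (S : Set V)).edgeSet := by
    rw [← hsum, ← Finset.sum_coe_sort]
    exact Finset.sum_congr rfl fun v _ => (hdeg v).symm
  rw [hsum']
  simp only [Finset.coe_sort_coe, Fintype.card_coe] at h5 ⊢
  omega

section Transversal

variable {ι α : Type*} [Fintype ι] [DecidableEq ι] [Fintype α] [DecidableEq α]

/-- The transversals of the parts `O z`, for `z ∈ Z`, which are independent with respect to `R`.
Outside `Z` they take the value `a₀`. -/
def independentTransversals (O : ι → Finset α) (R : α → α → Prop) [DecidableRel R] (a₀ : α)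
    (Z : Finset ι) : Finset (ι → α) :=
  Finset.univ.filter fun p => (∀ z ∈ Z, p z ∈ O z) ∧ (∀ z ∉ Z, p z = a₀) ∧
    ∀ y ∈ Z, ∀ z ∈ Z, y ≠ z → ¬ R (p y) (p z)

variable {O : ι → Finset α} {R : α → α → Prop} [DecidableRel R] {a₀ : α} {Z : Finset ι}

theorem mem_independentTransversals {p : ι → α} :
    p ∈ independentTransversals O R a₀ Z ↔ (∀ z ∈ Z, p z ∈ O z) ∧ (∀ z ∉ Z, p z = a₀) ∧
      ∀ y ∈ Z, ∀ z ∈ Z, y ≠ z → ¬ R (p y) (p z) := by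
  simp [independentTransversals]

theorem card_filter_transversals_le (z : ι) (b : α) :
    ((independentTransversals O R a₀ Z).filter fun p => p z = b).card ≤
      (independentTransversals O R a₀ (Z.erase z)).card := by
  refine Finset.card_le_card_of_injOn (fun p => Function.update p z a₀) ?_ ?_
  · intro p hp
    rw [Finset.mem_coe, Finset.mem_filter, mem_independentTransversals] at hp
    obtain ⟨⟨h1, h2, h3⟩, -⟩ := hp
    rw [Finset.mem_coe, mem_independentTransversals]
    refine ⟨fun y hy => ?_, fun y hy => ?_, fun y hy w hw hyw => ?_⟩
    · rw [Finset.mem_erase] at hy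
      simpa [hy.1] using h1 y hy.2
    · by_cases hyz : y = z
      · simp [hyz]
      · simpa [hyz] using h2 y fun h => hy (Finset.mem_erase.2 ⟨hyz, h⟩)
    · rw [Finset.mem_erase] at hy hw
      simpa [hy.1, hw.1] using h3 y hy.2 w hw.2 hyw
  · intro p hp q hq hpq
    rw [Finset.mem_coe, Finset.mem_filter] at hp hq
    funext y
    by_cases hyz : y = z
    · rw [hyz, hp.2, hq.2]
    · simpa [hyz] using congrFun hpq y

theorem card_transversals_insert (hR : ∀ a b, R a b → R b a)
    (hdeg : ∀ a, (Finset.univ.filter (R a)).card ≤ 5) (hO : ∀ z, 20 ≤ (O z).card)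
    (hdisj : ∀ y z, y ≠ z → Disjoint (O y) (O z)) {y : ι} (hy : y ∉ Z) :
    10 * (independentTransversals O R a₀ Z).card ≤
      (independentTransversals O R a₀ (insert y Z)).card := by
  induction hn : Z.card using Nat.strong_induction_on generalizing Z y with
  | _ n ih =>
    set T := independentTransversals O R a₀ Z with hT
    have hbad : ∀ b, 10 * (T.filter fun p => ∃ z ∈ Z, p z = b).card ≤ T.card := by
      intro b
      by_cases hb : ∃ z ∈ Z, b ∈ O z
      · obtain ⟨z, hz, hbz⟩ := hb
        have hsub : (T.filter fun p => ∃ z ∈ Z, p z = b) ⊆ T.filter fun p => p z = b := by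
          intro p hp
          rw [Finset.mem_filter] at hp ⊢
          obtain ⟨hpT, z', hz', hpz⟩ := hp
          refine ⟨hpT, ?_⟩
          by_cases hzz : z' = z
          · rw [← hzz, hpz]
          · have := (mem_independentTransversals.1 hpT).1 z' hz'
            rw [hpz] at this
            exact absurd hbz (Finset.disjoint_left.1 (hdisj _ _ hzz) this)
        have h1 := (Finset.card_le_card hsub).trans (card_filter_transversals_le z b)
        have h2 := ih (Z.erase z).card (by rw [← hn]; exact Finset.card_erase_lt_of_mem hz)
          (Finset.notMem_erase z Z) rfl
        rw [Finset.insert_erase hz, ← hT] at h2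
        omega
      · have : (T.filter fun p => ∃ z ∈ Z, p z = b) = ∅ := by
          refine Finset.filter_eq_empty_iff.2 fun p hp => ?_
          rintro ⟨z, hz, hpz⟩
          exact hb ⟨z, hz, hpz ▸ (mem_independentTransversals.1 hp).1 z hz⟩
        rw [this]
        simp
    have hgood : ∀ w, T.card ≤ 2 * (T.filter fun p => ∀ z ∈ Z, ¬ R w (p z)).card := by
      intro w
      have h1 : (T.filter fun p => ¬ ∀ z ∈ Z, ¬ R w (p z)) ⊆
          (Finset.univ.filter (R w)).biUnion fun b => T.filter fun p => ∃ z ∈ Z, p z = b := by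
        intro p hp
        rw [Finset.mem_filter] at hp
        obtain ⟨hpT, hp⟩ := hp
        push Not at hp
        obtain ⟨z, hz, hwz⟩ := hp
        rw [Finset.mem_biUnion]
        exact ⟨p z, by simpa using hwz, by simpa [hpT] using ⟨z, hz, rfl⟩⟩
      have h2 := (Finset.card_le_card h1).trans Finset.card_biUnion_le
      have h3 := Finset.sum_le_card_nsmul (Finset.univ.filter (R w))
        (fun b => 10 * (T.filter fun p => ∃ z ∈ Z, p z = b).card) T.card fun b _ => hbad b
      rw [← Finset.mul_sum, smul_eq_mul] at h3
      have h4 := Nat.mul_le_mul_right T.card (hdeg w)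
      have h5 := Finset.card_filter_add_card_filter_not (s := T) (fun p => ∀ z ∈ Z, ¬ R w (p z))
      omega
    have hinj : ((O y).sigma fun w => T.filter fun p => ∀ z ∈ Z, ¬ R w (p z)).card ≤
        (independentTransversals O R a₀ (insert y Z)).card := by
      refine Finset.card_le_card_of_injOn (fun x => Function.update x.2 y x.1) ?_ ?_
      · rintro ⟨w, p⟩ hx
        rw [Finset.mem_coe, Finset.mem_sigma, Finset.mem_filter,
          mem_independentTransversals] at hx
        obtain ⟨hw, ⟨h1, h2, h3⟩, h4⟩ := hx
        simp only at hw h1 h2 h3 h4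
        have hne : ∀ z ∈ Z, z ≠ y := fun z hz h => hy (h ▸ hz)
        rw [Finset.mem_coe, mem_independentTransversals]
        refine ⟨fun z hz => ?_, fun z hz => ?_, fun z hz z' hz' hzz => ?_⟩
        · rcases Finset.mem_insert.1 hz with rfl | hz
          · simpa using hw
          · simpa [hne z hz] using h1 z hz
        · rw [Finset.mem_insert, not_or] at hz
          simpa [hz.1] using h2 z hz.2
        · rcases Finset.mem_insert.1 hz with rfl | hzZ <;>
            rcases Finset.mem_insert.1 hz' with rfl | hz'
          · exact absurd rfl hzz
          · simpa [hne z' hz'] using h4 z' hz'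
          · simpa [hne z hzZ] using fun h => h4 z hzZ (hR _ _ h)
          · simpa [hne z hzZ, hne z' hz'] using h3 z hzZ z' hz' hzz
      · rintro ⟨w, p⟩ hx ⟨w', p'⟩ hx' h
        rw [Finset.mem_coe, Finset.mem_sigma, Finset.mem_filter,
          mem_independentTransversals] at hx hx'
        simp only at h
        have hw : w = w' := by simpa using congrFun h y
        have hp : p = p' := by
          funext z
          by_cases hzy : z = y
          · have e1 := hx.2.1.2.1 y hy
            have e2 := hx'.2.1.2.1 y hy
            simp only at e1 e2
            rw [hzy, e1, e2]
          · simpa [hzy] using congrFun h z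
        rw [hw, hp]
    rw [Finset.card_sigma] at hinj
    have h6 := Finset.card_nsmul_le_sum (O y)
      (fun w => 2 * (T.filter fun p => ∀ z ∈ Z, ¬ R w (p z)).card) T.card fun w _ => hgood w
    rw [← Finset.mul_sum, smul_eq_mul] at h6
    have h7 := Nat.mul_le_mul_right T.card (hO y)
    omega

/-- Large parts of a graph of maximum degree five have an independent transversal. -/
theorem exists_independent_transversal (hR : ∀ a b, R a b → R b a)
    (hdeg : ∀ a, (Finset.univ.filter (R a)).card ≤ 5) (hO : ∀ z, 20 ≤ (O z).card)
    (hdisj : ∀ y z, y ≠ z → Disjoint (O y) (O z)) :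
    ∃ p : ι → α, (∀ z, p z ∈ O z) ∧ ∀ y z, y ≠ z → ¬ R (p y) (p z) := by
  classical
  by_cases hι : Nonempty ι
  swap
  · exact ⟨fun z => absurd ⟨z⟩ hι, fun z => absurd ⟨z⟩ hι, fun z => absurd ⟨z⟩ hι⟩
  obtain ⟨z₀⟩ := hι
  obtain ⟨a₀, -⟩ : (O z₀).Nonempty := Finset.card_pos.1 (by have := hO z₀; omega)
  have hpos : ∀ Z : Finset ι, 0 < (independentTransversals O R a₀ Z).card := by
    intro Z
    induction Z using Finset.induction_on with
    | empty =>
      exact Finset.card_pos.2 ⟨fun _ => a₀, mem_independentTransversals.2 (by simp)⟩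
    | insert y Z hy ih =>
      have := card_transversals_insert (a₀ := a₀) hR hdeg hO hdisj hy
      omega
  obtain ⟨p, hp⟩ := Finset.card_pos.1 (hpos Finset.univ)
  obtain ⟨h1, -, h3⟩ := mem_independentTransversals.1 hp
  exact ⟨p, fun z => h1 z (Finset.mem_univ z),
    fun y z => h3 y (Finset.mem_univ y) z (Finset.mem_univ z)⟩

end Transversal

section StrongColouring

variable {ι α : Type*} [Fintype α] [DecidableEq α] [DecidableEq ι]

/-- A colouring is proper within the parts given by `part` if it uses the lists `L` and is injective
on each part. -/
def IsPartColouring (part : α → ι) (L : ι → Finset ℤ) (g : α → ℤ) : Prop :=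
  (∀ u, g u ∈ L (part u)) ∧ ∀ u w, part u = part w → g u = g w → u = w

/-- The related pairs which receive the same colour. -/
def monochromaticPairs (R : α → α → Prop) [DecidableRel R] (g : α → ℤ) : Finset (α × α) :=
  Finset.univ.filter fun x => R x.1 x.2 ∧ g x.1 = g x.2

variable {part : α → ι} {L : ι → Finset ℤ} {R : α → α → Prop} [DecidableRel R] {g : α → ℤ}

theorem exists_recolouring (hR : ∀ a b, R a b → R b a) (hirr : ∀ a, ¬ R a a)
    (hdeg : ∀ a, (Finset.univ.filter (R a)).card ≤ 4)
    (hpart : ∀ u, 24 ≤ (Finset.univ.filter fun w => part w = part u).card)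
    (hg : IsPartColouring part L g) {u₀ w₀ : α} (h₀ : R u₀ w₀) (hc₀ : g u₀ = g w₀) :
    ∃ g', IsPartColouring part L g' ∧ monochromaticPairs R g' ⊂ monochromaticPairs R g := by
  classical
  obtain ⟨hgL, hginj⟩ := hg
  set a := g u₀ with ha
  have hparts : part u₀ ≠ part w₀ := fun h => by
    have := hginj _ _ h hc₀
    exact hirr u₀ (by rw [this] at h₀ ⊢; exact h₀)
  let O : {u // g u = a} → Finset α := fun u =>
    Finset.univ.filter fun w => part w = part u ∧ ∀ v, R u v → g w ≠ g v
  let R' : α → α → Prop := fun x y => R x y ∨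
    (g x = g y ∧ ((part x = part u₀ ∧ part y = part w₀) ∨ (part x = part w₀ ∧ part y = part u₀)))
  obtain ⟨p, hpO, hpR⟩ : ∃ p : {u // g u = a} → α, (∀ z, p z ∈ O z) ∧
      ∀ y z, y ≠ z → ¬ R' (p y) (p z) := by
    refine exists_independent_transversal ?_ ?_ ?_ ?_
    · rintro x y (h | ⟨h1, h2⟩)
      · exact Or.inl (hR _ _ h)
      · exact Or.inr ⟨h1.symm, by tauto⟩
    · intro x
      have hsub : Finset.univ.filter (R' x) ⊆ Finset.univ.filter (R x) ∪
          Finset.univ.filter fun y => g x = g y ∧ ((part x = part u₀ ∧ part y = part w₀) ∨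
            (part x = part w₀ ∧ part y = part u₀)) := by
        intro y hy
        simpa [R'] using hy
      refine (Finset.card_le_card hsub).trans ((Finset.card_union_le _ _).trans ?_)
      have h1 : (Finset.univ.filter fun y => g x = g y ∧
          ((part x = part u₀ ∧ part y = part w₀) ∨
            (part x = part w₀ ∧ part y = part u₀))).card ≤ 1 := by
        refine Finset.card_le_one.2 fun y hy z hz => ?_
        simp only [Finset.mem_filter, Finset.mem_univ, true_and] at hy hz
        refine hginj y z ?_ (hy.1.symm.trans hz.1)
        rcases hy.2 with h | h <;> rcases hz.2 with h' | h'
        · rw [h.2, h'.2]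
        · exact absurd (h.1.symm.trans h'.1) hparts
        · exact absurd (h'.1.symm.trans h.1) hparts
        · rw [h.2, h'.2]
      have := hdeg x
      omega
    · intro u
      have h1 : (Finset.univ.filter fun w => part w = part u.1) ⊆
          O u ∪ Finset.univ.filter fun w => part w = part u.1 ∧ ∃ v, R u v ∧ g w = g v := by
        intro w hw
        simp only [Finset.mem_filter, Finset.mem_univ, true_and, Finset.mem_union, O] at hw ⊢
        by_cases h : ∃ v, R u v ∧ g w = g v
        · exact Or.inr ⟨hw, h⟩
        · push Not at h
          exact Or.inl ⟨hw, h⟩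
      have h2 : (Finset.univ.filter fun w => part w = part u.1 ∧ ∃ v, R u v ∧ g w = g v).card ≤
          ((Finset.univ.filter (R u)).image g).card := by
        refine Finset.card_le_card_of_injOn g ?_ ?_
        · intro w hw
          simp only [Finset.coe_filter, Finset.mem_univ, true_and, Set.mem_ofPred_eq] at hw
          obtain ⟨-, v, hv, hwv⟩ := hw
          rw [hwv]
          exact Finset.mem_coe.2 (Finset.mem_image_of_mem g (by simpa using hv))
        · intro w hw w' hw' h
          simp only [Finset.coe_filter, Finset.mem_univ, true_and, Set.mem_ofPred_eq] at hw hw'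
          exact hginj w w' (hw.1.trans hw'.1.symm) h
      have h3 := (Finset.card_le_card h1).trans (Finset.card_union_le _ _)
      have h4 := h2.trans (Finset.card_image_le.trans (hdeg u))
      have h5 := hpart u
      omega
    · intro y z hyz
      refine Finset.disjoint_left.2 fun w hw hw' => hyz (Subtype.ext ?_)
      simp only [Finset.mem_filter, Finset.mem_univ, true_and, O] at hw hw'
      exact hginj _ _ (hw.1.symm.trans hw'.1) (y.2.trans z.2.symm)
  have hpp : ∀ z, part (p z) = part z := fun z => by
    have := hpO z
    simp only [Finset.mem_filter, Finset.mem_univ, true_and, O] at this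
    exact this.1
  have hpne : ∀ z v, R z.1 v → g (p z) ≠ g v := fun z v => by
    have := hpO z
    simp only [Finset.mem_filter, Finset.mem_univ, true_and, O] at this
    exact this.2 v
  have hpinj : Function.Injective p := fun y z h => Subtype.ext
    (hginj _ _ (by rw [← hpp y, h, hpp z]) (y.2.trans z.2.symm))
  have hfix : ∀ z, g (p z) = a → p z = z := fun z h => hginj _ _ (hpp z) (h.trans z.2.symm)
  let σ : α → α := fun v => if h : g v = a then p ⟨v, h⟩ else
    if h' : ∃ z, p z = v then (h'.choose : α) else v
  have s1 : ∀ v (h : g v = a), σ v = p ⟨v, h⟩ := fun v h => by simp [σ, h]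
  have s2 : ∀ z, g (p z) ≠ a → σ (p z) = z := fun z h => by
    have h' : ∃ y, p y = p z := ⟨z, rfl⟩
    simp only [σ, dif_neg h, dif_pos h']
    rw [hpinj h'.choose_spec]
  have s3 : ∀ v, g v ≠ a → (∀ z, p z ≠ v) → σ v = v := fun v h h' => by
    simp only [σ, dif_neg h]
    rw [dif_neg (by push Not; exact h')]
  have hσσ : Function.Involutive σ := by
    intro v
    by_cases h : g v = a
    · rw [s1 v h]
      by_cases h' : g (p ⟨v, h⟩) = a
      · rw [hfix _ h', s1 v h, hfix _ h']
      · exact s2 _ h'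
    · by_cases h' : ∃ z, p z = v
      · obtain ⟨z, rfl⟩ := h'
        rw [s2 z h, s1 _ z.2]
      · push Not at h'
        rw [s3 v h h', s3 v h h']
  have hσpart : ∀ v, part (σ v) = part v := by
    intro v
    by_cases h : g v = a
    · rw [s1 v h, hpp]
    · by_cases h' : ∃ z, p z = v
      · obtain ⟨z, rfl⟩ := h'
        rw [s2 z h, hpp]
      · push Not at h'
        rw [s3 v h h']
  have hσa : ∀ v, g (σ v) = a → ∃ z, p z = v := by
    intro v hv
    by_contra! h'
    by_cases h : g v = a
    · rw [s1 v h] at hv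
      exact h' _ (hfix _ hv)
    · rw [s3 v h h'] at hv
      exact h hv
  have hkey : ∀ v w, R v w → g v = a → g (σ v) = g (σ w) → g (σ v) ≠ a → g w = a := by
    intro v w hvw hv hvw' hne
    by_contra hw
    by_cases h' : ∃ z, p z = w
    · obtain ⟨z, rfl⟩ := h'
      rw [s2 z hw] at hvw'
      exact hne (hvw'.trans z.2)
    · push Not at h'
      rw [s3 w hw h', s1 v hv] at hvw'
      exact hpne ⟨v, hv⟩ w hvw hvw'
  have hmono : ∀ v w, R v w → g (σ v) = g (σ w) → g v = g w := by
    intro v w hvw h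
    by_cases hne : g (σ v) = a
    · exfalso
      obtain ⟨y, rfl⟩ := hσa v hne
      obtain ⟨z, rfl⟩ := hσa w (h ▸ hne)
      exact hpR y z (fun hyz => hirr _ (hyz ▸ hvw)) (Or.inl hvw)
    · by_cases hv : g v = a
      · rw [hv, hkey v w hvw hv h hne]
      · by_cases hw : g w = a
        · rw [hw, hkey w v (hR _ _ hvw) hw h.symm (h ▸ hne)]
        · have hv' : ∀ z, p z ≠ v := by
            rintro z rfl
            rw [s2 z hv] at hne
            exact hne z.2
          have hw' : ∀ z, p z ≠ w := by
            rintro z rfl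
            rw [h, s2 z hw] at hne
            exact hne z.2
          rwa [s3 v hv hv', s3 w hw hw'] at h
  refine ⟨fun v => g (σ v), ⟨fun v => hσpart v ▸ hgL (σ v), fun v w hvw h => ?_⟩, ?_⟩
  · exact hσσ.injective (hginj _ _ (by rw [hσpart, hσpart, hvw]) h)
  · refine Finset.ssubset_iff_of_subset ?_ |>.2 ⟨(u₀, w₀),
      by simp [monochromaticPairs, h₀, ← hc₀, ha], ?_⟩
    · rintro ⟨v, w⟩ h
      simp only [monochromaticPairs, Finset.mem_filter, Finset.mem_univ, true_and] at h ⊢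
      exact ⟨h.1, hmono v w h.1 h.2⟩
    · intro h
      simp only [monochromaticPairs, Finset.mem_filter, Finset.mem_univ, true_and] at h
      have h2 := h.2
      rw [s1 u₀ rfl, s1 w₀ hc₀.symm] at h2
      refine hpR ⟨u₀, rfl⟩ ⟨w₀, hc₀.symm⟩ (fun h => hparts ?_)
        (Or.inr ⟨h2, Or.inl ⟨hpp _, hpp _⟩⟩)
      exact congrArg part (congrArg Subtype.val h)

/-- Vertices in large parts can be coloured injectively on each part, avoiding the edges of a graph
of maximum degree four. -/
theorem exists_strong_colouring (hR : ∀ a b, R a b → R b a) (hirr : ∀ a, ¬ R a a)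
    (hdeg : ∀ a, (Finset.univ.filter (R a)).card ≤ 4)
    (hpart : ∀ u, 24 ≤ (Finset.univ.filter fun w => part w = part u).card)
    (hL : ∀ u, (Finset.univ.filter fun w => part w = part u).card ≤ (L (part u)).card) :
    ∃ g, IsPartColouring part L g ∧ ∀ u w, R u w → g u ≠ g w := by
  classical
  have hex : ∃ g, IsPartColouring part L g := by
    have hemb : ∀ z : Set.range part, Nonempty ({u // part u = z} ↪ L z) := by
      rintro ⟨_, u, rfl⟩
      refine Function.Embedding.nonempty_of_card_le ?_
      rw [Fintype.card_subtype, Fintype.card_coe]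
      exact hL u
    let g : α → ℤ := fun u => (hemb ⟨part u, u, rfl⟩).some ⟨u, rfl⟩
    refine ⟨g, fun u => ((hemb ⟨part u, u, rfl⟩).some ⟨u, rfl⟩).2, fun u w huw h => ?_⟩
    have hgen : ∀ (z : Set.range part) (hw : part w = z),
        g w = (hemb z).some ⟨w, hw⟩ := by
      intro z hw
      obtain rfl : z = ⟨part w, w, rfl⟩ := Subtype.ext hw.symm
      rfl
    rw [hgen ⟨part u, u, rfl⟩ huw.symm] at h
    exact congrArg Subtype.val ((hemb ⟨part u, u, rfl⟩).some.injective (Subtype.ext h))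
  obtain ⟨g, hg⟩ := hex
  induction hn : (monochromaticPairs R g).card using Nat.strong_induction_on generalizing g with
  | _ n ih =>
    by_cases hcon : ∀ u w, R u w → g u ≠ g w
    · exact ⟨g, hg, hcon⟩
    · push Not at hcon
      obtain ⟨u, w, huw, h⟩ := hcon
      obtain ⟨g', hg', hlt⟩ := exists_recolouring hR hirr hdeg hpart hg huw h
      exact ih _ (hn ▸ Finset.card_lt_card hlt) g' hg' rfl

end StrongColouring

namespace SimpleGraph

variable {V : Type*} (G : SimpleGraph V)

/-- A labelling of the vertices in `C` with labels `1, …, M` such that labels of adjacent vertices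
differ by at least `k` and distinct vertices with a common neighbour in `S` have distinct labels. -/
def IsPartialLabelling (k M : ℕ) (S C : Finset V) (f : V → ℤ) : Prop :=
  (∀ v ∈ C, f v ∈ Finset.Icc (1 : ℤ) M) ∧
  (∀ u ∈ C, ∀ v ∈ C, G.Adj u v → (k : ℤ) ≤ |f u - f v|) ∧
  ∀ u ∈ C, ∀ v ∈ C, u ≠ v → (∃ w ∈ S, G.Adj u w ∧ G.Adj w v) → f u ≠ f v

variable {G} {k M : ℕ} {S C F : Finset V} {f : V → ℤ}

/-- A label can be chosen for a vertex with few constraints. -/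
theorem exists_label (hk : 1 ≤ k) (A B : Finset V) (f : V → ℤ)
    (hcount : (2 * k - 1) * A.card + B.card < M) :
    ∃ a ∈ Finset.Icc (1 : ℤ) M, (∀ w ∈ A, (k : ℤ) ≤ |a - f w|) ∧ ∀ w ∈ B, a ≠ f w := by
  classical
  set X := A.biUnion (fun w => Finset.Ioo (f w - k) (f w + k)) ∪ B.image f with hX
  have hcard : X.card < (Finset.Icc (1 : ℤ) M).card := by
    refine lt_of_le_of_lt ((Finset.card_union_le _ _).trans
      (Nat.add_le_add Finset.card_biUnion_le Finset.card_image_le)) ?_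
    have : ∀ w ∈ A, (Finset.Ioo (f w - k) (f w + k)).card ≤ 2 * k - 1 := by
      intro w _
      rw [Int.card_Ioo]
      omega
    have h1 := Finset.sum_le_card_nsmul A _ _ this
    rw [smul_eq_mul, mul_comm] at h1
    rw [Int.card_Icc]
    omega
  obtain ⟨a, ha, haX⟩ := Finset.exists_mem_notMem_of_card_lt_card hcard
  refine ⟨a, ha, fun w hw => ?_, fun w hw h => haX ?_⟩
  · by_contra! h
    refine haX (Finset.mem_union_left _ (Finset.mem_biUnion.2 ⟨w, hw, ?_⟩))
    rw [abs_lt] at h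
    rw [Finset.mem_Ioo]
    omega
  · exact Finset.mem_union_right _ (h ▸ Finset.mem_image_of_mem f hw)

/-- A labelling of `S \ F` can be used on a set `C` no two of whose vertices have a common
neighbour in `F`. -/
theorem IsPartialLabelling.restrict [DecidableEq V]
    (hf : G.IsPartialLabelling k M (S \ F) (S \ F) f)
    (hC : C ⊆ S \ F) (hF : ∀ w ∈ F, ∀ u ∈ C, ∀ v ∈ C, G.Adj w u → G.Adj w v → u = v) :
    G.IsPartialLabelling k M S C f := by
  obtain ⟨h1, h2, h3⟩ := hf
  refine ⟨fun v hv => h1 v (hC hv), fun u hu v hv => h2 u (hC hu) v (hC hv),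
    fun u hu v hv huv hw => ?_⟩
  obtain ⟨w, hw, huw, hwv⟩ := hw
  by_cases hwF : w ∈ F
  · exact absurd (hF w hwF u hu v hv huw.symm hwv) huv
  · exact h3 u (hC hu) v (hC hv) huv ⟨w, by simp [hw, hwF], huw, hwv⟩

/-- The neighbours of a vertex inside `S`. -/
def nbrsIn (G : SimpleGraph V) [DecidableRel G.Adj] (S : Finset V) (v : V) : Finset V :=
  S.filter (G.Adj v)

variable [DecidableRel G.Adj]

theorem mem_nbrsIn {S : Finset V} {v w : V} : w ∈ G.nbrsIn S v ↔ w ∈ S ∧ G.Adj v w := by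
  simp [nbrsIn]

variable [DecidableEq V]

/-- A partial labelling extends to a vertex with few constraints. -/
theorem IsPartialLabelling.extend (hk : 1 ≤ k) (hf : G.IsPartialLabelling k M S C f) {y : V}
    (hy : y ∉ C)
    (hcount : (2 * k - 1) * (G.nbrsIn C y).card + ∑ z ∈ G.nbrsIn S y, (G.nbrsIn C z).card < M) :
    ∃ f', G.IsPartialLabelling k M S (insert y C) f' := by
  obtain ⟨h1, h2, h3⟩ := hf
  set B := (G.nbrsIn S y).biUnion fun z => G.nbrsIn C z with hB
  obtain ⟨a, ha, hadj, hne⟩ := exists_label (M := M) hk (G.nbrsIn C y) B f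
    (lt_of_le_of_lt (Nat.add_le_add_left Finset.card_biUnion_le _) hcount)
  have hCy : ∀ v ∈ C, v ≠ y := fun v hv h => hy (h ▸ hv)
  have hmemB : ∀ v ∈ C, (∃ w ∈ S, G.Adj y w ∧ G.Adj w v) → v ∈ B := by
    rintro v hv ⟨w, hw, hyw, hwv⟩
    exact Finset.mem_biUnion.2 ⟨w, mem_nbrsIn.2 ⟨hw, hyw⟩, mem_nbrsIn.2 ⟨hv, hwv⟩⟩
  have e1 : ∀ v ∈ C, Function.update f y a v = f v := fun v hv => by simp [hCy v hv]
  have e2 : Function.update f y a y = a := by simp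
  refine ⟨Function.update f y a, fun v hv => ?_, fun u hu v hv huv => ?_,
    fun u hu v hv huv hw => ?_⟩
  · rcases Finset.mem_insert.1 hv with rfl | hv
    · rwa [e2]
    · rw [e1 v hv]
      exact h1 v hv
  · rcases Finset.mem_insert.1 hu with rfl | hu <;> rcases Finset.mem_insert.1 hv with rfl | hv
    · exact absurd huv (G.irrefl)
    · rw [e2, e1 v hv]
      exact hadj v (mem_nbrsIn.2 ⟨hv, huv⟩)
    · rw [e2, e1 u (by assumption), abs_sub_comm]
      exact hadj u (mem_nbrsIn.2 ⟨by assumption, huv.symm⟩)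
    · rw [e1 u hu, e1 v hv]
      exact h2 u hu v hv huv
  · rcases Finset.mem_insert.1 hu with rfl | hu <;> rcases Finset.mem_insert.1 hv with rfl | hv
    · exact absurd rfl huv
    · rw [e2, e1 v hv]
      exact hne v (hmemB v hv hw)
    · rw [e2, e1 u (by assumption)]
      obtain ⟨w, hw, huw, hwv⟩ := hw
      exact (hne u (hmemB u (by assumption) ⟨w, hw, hwv.symm, huw.symm⟩)).symm
    · rw [e1 u hu, e1 v hv]
      exact h3 u hu v hv huv hw

/-- A partial labelling extends greedily to vertices with few neighbours at distance one
and two. -/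
theorem IsPartialLabelling.extend_greedy (hk : 1 ≤ k) (hf : G.IsPartialLabelling k M S C f)
    (hCS : C ⊆ S) (hFS : F ⊆ S)
    (hcount : ∀ y ∈ F, (2 * k - 1) * (G.nbrsIn S y).card +
      ∑ z ∈ G.nbrsIn S y, (G.nbrsIn S z).card < M) :
    ∃ f', G.IsPartialLabelling k M S (C ∪ F) f' := by
  induction F using Finset.induction_on with
  | empty => exact ⟨f, by simpa using hf⟩
  | insert y F hy ih =>
    obtain ⟨f', hf'⟩ := ih (fun v hv => hFS (by simp [hv])) fun v hv => hcount v (by simp [hv])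
    rw [Finset.union_insert]
    by_cases hyC : y ∈ C ∪ F
    · exact ⟨f', by rwa [Finset.insert_eq_of_mem hyC]⟩
    · have hsub : C ∪ F ⊆ S := Finset.union_subset hCS fun v hv => hFS (by simp [hv])
      have hmono : ∀ v, (G.nbrsIn (C ∪ F) v).card ≤ (G.nbrsIn S v).card :=
        fun v => Finset.card_le_card (Finset.filter_subset_filter _ hsub)
      refine hf'.extend hk hyC (lt_of_le_of_lt (Nat.add_le_add
        (Nat.mul_le_mul_left _ (hmono y)) (Finset.sum_le_sum fun z _ => hmono z))
        (hcount y (by simp)))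

end SimpleGraph

namespace SimpleGraph

variable {V : Type*} (G : SimpleGraph V) [DecidableRel G.Adj]

/-- The degree of a vertex into `S`. -/
def degIn (S : Finset V) (v : V) : ℕ := (G.nbrsIn S v).card

/-- The vertices of degree two whose neighbours have degree at most `13`. -/
def thin (S : Finset V) : Finset V :=
  S.filter fun v => G.degIn S v = 2 ∧ ∀ w ∈ G.nbrsIn S v, G.degIn S w ≤ 13

/-- The neighbours of degree at least `14`. -/
def bigNbrs (S : Finset V) (v : V) : Finset V :=
  (G.nbrsIn S v).filter fun w => 14 ≤ G.degIn S w

variable {G} in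
theorem mem_thin {S : Finset V} {v : V} : v ∈ G.thin S ↔
    v ∈ S ∧ G.degIn S v = 2 ∧ ∀ w ∈ G.nbrsIn S v, G.degIn S w ≤ 13 := by
  simp [thin]

variable {G} in
theorem mem_bigNbrs {S : Finset V} {v w : V} :
    w ∈ G.bigNbrs S v ↔ (w ∈ S ∧ G.Adj v w) ∧ 14 ≤ G.degIn S w := by
  simp [bigNbrs, mem_nbrsIn]

variable {G} in
theorem notMem_thin_of_big {S : Finset V} (w : V) (hw : 14 ≤ G.degIn S w) : w ∉ G.thin S := fun h => by
  have := (mem_thin.1 h).2.1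
  omega

variable [DecidableEq V]

/-- The vertices of degree at most five with exactly one neighbour of degree at least `14`, all of
whose other neighbours are thin. -/
def light (S : Finset V) : Finset V :=
  S.filter fun v => G.degIn S v ≤ 5 ∧ (G.bigNbrs S v).card = 1 ∧
    ∀ w ∈ G.nbrsIn S v, 14 ≤ G.degIn S w ∨ w ∈ G.thin S

/-- A minimal vertex set without a labelling. -/
structure IsCritical (k D : ℕ) (S : Finset V) : Prop where
  one_le : 1 ≤ k
  le_bound : 190 + 2 * k ≤ D
  degIn_le : ∀ v, G.degIn S v ≤ D
  exists_of_ssubset : ∀ F ⊆ S, F.Nonempty →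
    ∃ f, G.IsPartialLabelling k (D + 2 * k - 1) (S \ F) (S \ F) f
  not_exists : ¬ ∃ f, G.IsPartialLabelling k (D + 2 * k - 1) S S f

variable {G} {k D : ℕ} {S F : Finset V}

theorem mem_light {v : V} : v ∈ G.light S ↔ v ∈ S ∧ G.degIn S v ≤ 5 ∧
    (G.bigNbrs S v).card = 1 ∧ ∀ w ∈ G.nbrsIn S v, 14 ≤ G.degIn S w ∨ w ∈ G.thin S := by
  simp [light]

/-- A thin vertex has no three distinct neighbours. -/
theorem eq_of_adj_thin {w u p q : V} (hw : w ∈ G.thin S) (hu : u ∈ S) (hp : p ∈ S) (hq : q ∈ S)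
    (hwu : G.Adj w u) (hwp : G.Adj w p) (hwq : G.Adj w q) (hup : u ≠ p) (huq : u ≠ q) : p = q := by
  by_contra hpq
  have hsub : {u, p, q} ⊆ G.nbrsIn S w := by
    intro z hz
    simp only [Finset.mem_insert, Finset.mem_singleton] at hz
    rcases hz with rfl | rfl | rfl
    exacts [mem_nbrsIn.2 ⟨hu, hwu⟩, mem_nbrsIn.2 ⟨hp, hwp⟩, mem_nbrsIn.2 ⟨hq, hwq⟩]
  have h1 := Finset.card_le_card hsub
  rw [Finset.card_eq_three.2 ⟨u, p, q, hup, huq, hpq, rfl⟩] at h1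
  have := (mem_thin.1 hw).2.1
  rw [degIn] at this
  omega

namespace IsCritical

theorem two_le_degIn (h : G.IsCritical k D S) {v : V} (hv : v ∈ S) : 2 ≤ G.degIn S v := by
  by_contra! hlt
  obtain ⟨f, hf⟩ := h.exists_of_ssubset {v} (by simpa using hv) (by simp)
  have hle : (G.nbrsIn S v).card ≤ 1 := Nat.le_of_lt_succ hlt
  have hf₁ : G.IsPartialLabelling k (D + 2 * k - 1) S (S \ {v}) f := by
    refine hf.restrict subset_rfl fun w hw a ha b hb hwa hwb => ?_
    obtain rfl := Finset.mem_singleton.1 hw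
    exact Finset.card_le_one.1 hle a (mem_nbrsIn.2 ⟨Finset.sdiff_subset ha, hwa⟩) b
      (mem_nbrsIn.2 ⟨Finset.sdiff_subset hb, hwb⟩)
  have h1 : (G.nbrsIn (S \ {v}) v).card ≤ 1 :=
    (Finset.card_le_card (Finset.filter_subset_filter _ Finset.sdiff_subset)).trans hle
  have h2 : ∑ z ∈ G.nbrsIn S v, (G.nbrsIn (S \ {v}) z).card ≤
      (G.nbrsIn S v).card • (D - 1) := by
    refine Finset.sum_le_card_nsmul _ _ _ fun z hz => ?_
    have hsub : G.nbrsIn (S \ {v}) z ⊆ (G.nbrsIn S z).erase v := by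
      intro w hw
      rw [mem_nbrsIn, Finset.mem_sdiff, Finset.mem_singleton] at hw
      exact Finset.mem_erase.2 ⟨hw.1.2, mem_nbrsIn.2 ⟨hw.1.1, hw.2⟩⟩
    refine (Finset.card_le_card hsub).trans ?_
    rw [Finset.card_erase_of_mem (mem_nbrsIn.2 ⟨hv, (mem_nbrsIn.1 hz).2.symm⟩)]
    exact Nat.sub_le_sub_right (h.degIn_le z) 1
  have h3 : (G.nbrsIn S v).card • (D - 1) ≤ D - 1 := by
    simpa using Nat.mul_le_mul_right (D - 1) hle
  have h4 := Nat.mul_le_mul_left (2 * k - 1) h1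
  have := h.one_le
  have := h.le_bound
  obtain ⟨f₂, hf₂⟩ := hf₁.extend h.one_le (y := v) (by simp) (by omega)
  refine h.not_exists ⟨f₂, ?_⟩
  rwa [← Finset.erase_eq, Finset.insert_erase hv] at hf₂

/-- Thin vertices can be labelled last. -/
theorem not_exists_without_thin (h : G.IsCritical k D S) (hF : F ⊆ G.thin S) :
    ¬ ∃ f, G.IsPartialLabelling k (D + 2 * k - 1) S (S \ F) f := by
  rintro ⟨f, hf⟩
  have hFS : F ⊆ S := fun v hv => (mem_thin.1 (hF hv)).1
  obtain ⟨f₂, hf₁⟩ := hf.extend_greedy h.one_le Finset.sdiff_subset hFS fun y hy => by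
    obtain ⟨-, h2, h13⟩ := mem_thin.1 (hF hy)
    have hs : ∑ z ∈ G.nbrsIn S y, (G.nbrsIn S z).card ≤ (G.nbrsIn S y).card • 13 :=
      Finset.sum_le_card_nsmul _ _ _ h13
    simp only [degIn, smul_eq_mul] at h2 hs
    rw [h2] at hs ⊢
    have := h.one_le
    have := h.le_bound
    omega
  rw [Finset.sdiff_union_of_subset hFS] at hf₁
  exact h.not_exists ⟨f₂, hf₁⟩

/-- A vertex with thin neighbours has many other constraints. -/
theorem le_count (h : G.IsCritical k D S) {u : V} (hu : u ∈ S)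
    (hne : (G.nbrsIn S u ∩ G.thin S).Nonempty) :
    D + 2 * k - 1 ≤ (2 * k - 1) * (G.nbrsIn S u \ G.thin S).card +
      (∑ z ∈ G.nbrsIn S u \ G.thin S, G.degIn S z + (G.nbrsIn S u ∩ G.thin S).card) := by
  by_contra! hlt
  set F := G.nbrsIn S u ∩ G.thin S with hF
  have hFT : F ⊆ G.thin S := Finset.inter_subset_right
  have hFS : F ⊆ S := fun v hv => (mem_thin.1 (hFT hv)).1
  have hFadj : ∀ w ∈ F, G.Adj u w := fun w hw => (mem_nbrsIn.1 (Finset.mem_inter.1 hw).1).2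
  have huF : u ∉ F := fun hu => G.irrefl (hFadj u hu)
  obtain ⟨f, hf⟩ := h.exists_of_ssubset F hFS hne
  set C := (S \ F).erase u with hC
  have hCsub : C ⊆ S \ F := Finset.erase_subset _ _
  have hCS : C ⊆ S := hCsub.trans Finset.sdiff_subset
  have huC : u ∉ C := Finset.notMem_erase u _
  have hf₁ : G.IsPartialLabelling k (D + 2 * k - 1) S C f :=
    hf.restrict hCsub fun w hw p hp q hq hwp hwq =>
      eq_of_adj_thin (hFT hw) hu (hCS hp) (hCS hq) (hFadj w hw).symm hwp hwq
        (fun h => huC (h ▸ hp)) (fun h => huC (h ▸ hq))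
  have h1 : (G.nbrsIn C u).card ≤ (G.nbrsIn S u \ G.thin S).card := by
    refine Finset.card_le_card fun w hw => ?_
    obtain ⟨hw, huw⟩ := mem_nbrsIn.1 hw
    have hwF := (Finset.mem_sdiff.1 (hCsub hw)).2
    have hwN : w ∈ G.nbrsIn S u := mem_nbrsIn.2 ⟨hCS hw, huw⟩
    exact Finset.mem_sdiff.2 ⟨hwN, fun hT => hwF (Finset.mem_inter.2 ⟨hwN, hT⟩)⟩
  have h2 : ∑ z ∈ G.nbrsIn S u, (G.nbrsIn C z).card ≤
      ∑ z ∈ G.nbrsIn S u \ G.thin S, G.degIn S z + F.card := by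
    have hsplit : G.nbrsIn S u = (G.nbrsIn S u \ G.thin S) ∪ F :=
      (Finset.sdiff_union_inter _ _).symm
    rw [hsplit, Finset.sum_union, ← hsplit]
    · refine Nat.add_le_add (Finset.sum_le_sum fun z _ =>
        Finset.card_le_card (Finset.filter_subset_filter _ hCS)) ?_
      refine (Finset.sum_le_card_nsmul _ _ 1 fun z hz => ?_).trans (by simp)
      refine Finset.card_le_one.2 fun p hp q hq => ?_
      obtain ⟨hp, hzp⟩ := mem_nbrsIn.1 hp
      obtain ⟨hq, hzq⟩ := mem_nbrsIn.1 hq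
      exact eq_of_adj_thin (hFT hz) hu (hCS hp) (hCS hq) (hFadj z hz).symm hzp hzq
        (fun h => huC (h ▸ hp)) (fun h => huC (h ▸ hq))
    · exact Finset.disjoint_left.2 fun z hz hz' => (Finset.mem_sdiff.1 hz).2 (hFT hz')
  obtain ⟨f₂, hf₂⟩ := hf₁.extend h.one_le huC (lt_of_le_of_lt
    (Nat.add_le_add (Nat.mul_le_mul_left _ h1) h2) hlt)
  rw [hC, Finset.insert_erase (Finset.mem_sdiff.2 ⟨hu, huF⟩)] at hf₂
  exact h.not_exists_without_thin hFT ⟨f₂, hf₂⟩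

/-- A small vertex with a thin neighbour but without big neighbours has three neighbours which are
not thin. -/
theorem three_le_card_not_thin (h : G.IsCritical k D S) {u : V} (hu : u ∈ S)
    (hu13 : G.degIn S u ≤ 13) (hsmall : G.bigNbrs S u = ∅)
    (hne : (G.nbrsIn S u ∩ G.thin S).Nonempty) : 3 ≤ (G.nbrsIn S u \ G.thin S).card := by
  by_contra! hlt
  have h1 := h.le_count hu hne
  have h2 : ∑ z ∈ G.nbrsIn S u \ G.thin S, G.degIn S z ≤
      (G.nbrsIn S u \ G.thin S).card • 13 := by
    refine Finset.sum_le_card_nsmul _ _ _ fun z hz => ?_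
    by_contra! hz14
    have : z ∈ G.bigNbrs S u :=
      mem_bigNbrs.2 ⟨mem_nbrsIn.1 (Finset.mem_sdiff.1 hz).1, hz14⟩
    simp [hsmall] at this
  have h3 : (G.nbrsIn S u ∩ G.thin S).card ≤ 13 :=
    (Finset.card_le_card Finset.inter_subset_left).trans hu13
  have h4 : (2 * k - 1) * (G.nbrsIn S u \ G.thin S).card ≤ (2 * k - 1) * 2 :=
    Nat.mul_le_mul_left _ (by omega)
  rw [smul_eq_mul] at h2
  have := h.one_le
  have := h.le_bound
  omega

/-- No two thin vertices are adjacent. -/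
theorem not_adj_thin (h : G.IsCritical k D S) {u v : V} (hu : u ∈ G.thin S)
    (hv : v ∈ G.thin S) : ¬ G.Adj u v := by
  intro huv
  obtain ⟨huS, hu2, hu13⟩ := mem_thin.1 hu
  have hmem : v ∈ G.nbrsIn S u ∩ G.thin S :=
    Finset.mem_inter.2 ⟨mem_nbrsIn.2 ⟨(mem_thin.1 hv).1, huv⟩, hv⟩
  have h1 := h.three_le_card_not_thin huS (by omega) (Finset.filter_eq_empty_iff.2 fun w hw => by
    have := hu13 w hw
    omega) ⟨v, hmem⟩
  have h2 := Finset.card_le_card (Finset.sdiff_subset (s := G.nbrsIn S u) (t := G.thin S))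
  rw [degIn] at hu2
  omega

/-- The neighbours of a light vertex which are not thin. -/
theorem nbrsIn_sdiff_thin {u : V} (hu : u ∈ G.light S) :
    G.nbrsIn S u \ G.thin S = G.bigNbrs S u := by
  ext w
  rw [Finset.mem_sdiff, bigNbrs, Finset.mem_filter]
  refine and_congr_right fun hw => ⟨fun h => ?_, fun h => notMem_thin_of_big w h⟩
  exact ((mem_light.1 hu).2.2.2 w hw).resolve_right h

theorem card_inter_thin {u : V} (hu : u ∈ G.light S) :
    (G.nbrsIn S u ∩ G.thin S).card + 1 = G.degIn S u := by
  have h1 := Finset.card_sdiff_add_card_inter (G.nbrsIn S u) (G.thin S)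
  rw [nbrsIn_sdiff_thin hu, (mem_light.1 hu).2.2.1] at h1
  rw [degIn]
  omega

/-- The big neighbour of a light vertex has almost maximum degree. -/
theorem le_degIn_of_light (h : G.IsCritical k D S) {u x : V} (hu : u ∈ G.light S)
    (hx : x ∈ G.bigNbrs S u) : D ≤ G.degIn S x + 4 := by
  obtain ⟨huS, hu5, hu1, -⟩ := mem_light.1 hu
  have h2 := h.two_le_degIn huS
  have h3 := card_inter_thin hu
  have h1 := h.le_count huS (Finset.card_pos.1 (by omega))
  rw [nbrsIn_sdiff_thin hu] at h1
  obtain ⟨x', hx'⟩ := Finset.card_eq_one.1 hu1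
  rw [hx'] at h1 hx
  obtain rfl := Finset.mem_singleton.1 hx
  simp only [Finset.card_singleton, Finset.sum_singleton] at h1
  have := h.one_le
  have := h.le_bound
  omega

end IsCritical

end SimpleGraph

namespace SimpleGraph

/-- The number of labels which are available at a vertex. -/
theorem le_card_labels {V : Type*} {k M : ℕ} (hk : 1 ≤ k) (A : Finset V) (f : V → ℤ) (b : ℤ) :
    M ≤ ((Finset.Icc (1 : ℤ) M \ Finset.Ioo (b - k) (b + k)) \ A.image f).card +
      (2 * k - 1) + A.card := by
  have h1 := Finset.le_card_sdiff (A.image f) (Finset.Icc (1 : ℤ) M \ Finset.Ioo (b - k) (b + k))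
  have h2 := Finset.le_card_sdiff (Finset.Ioo (b - k) (b + k)) (Finset.Icc (1 : ℤ) M)
  have h3 : (A.image f).card ≤ A.card := Finset.card_image_le
  rw [Int.card_Icc, Int.card_Ioo] at h2
  omega

theorem hub_mem {V : Type*} {G : SimpleGraph V} [DecidableRel G.Adj] {S U : Finset V} {x : V → V}
    (hx : ∀ u ∈ U, G.bigNbrs S u = {x u}) {u : V} (hu : u ∈ U) :
    (x u ∈ S ∧ G.Adj u (x u)) ∧ 14 ≤ G.degIn S (x u) := by
  rw [← mem_bigNbrs, hx u hu]
  exact Finset.mem_singleton_self _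

variable {V : Type*} [DecidableEq V] {G : SimpleGraph V} [DecidableRel G.Adj]
  {k D : ℕ} {S C U : Finset V} {f : V → ℤ} {x : V → V}

/-- Few vertices are joined to a given vertex by a path through a thin vertex. -/
theorem card_thin_related_le {u : V} (hu : u ∈ S) (hT : (G.nbrsIn S u ∩ G.thin S).card ≤ 4)
    (hUS : U ⊆ S) :
    (U.filter fun w => u ≠ w ∧ ∃ v ∈ G.thin S, G.Adj v u ∧ G.Adj v w).card ≤ 4 := by
  have hsub : (U.filter fun w => u ≠ w ∧ ∃ v ∈ G.thin S, G.Adj v u ∧ G.Adj v w) ⊆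
      (G.nbrsIn S u ∩ G.thin S).biUnion fun v => (G.nbrsIn S v).erase u := by
    intro w hw
    obtain ⟨hwU, huw, v, hv, hvu, hvw⟩ := Finset.mem_filter.1 hw
    refine Finset.mem_biUnion.2 ⟨v, Finset.mem_inter.2
      ⟨mem_nbrsIn.2 ⟨(mem_thin.1 hv).1, hvu.symm⟩, hv⟩, Finset.mem_erase.2 ⟨huw.symm, ?_⟩⟩
    exact mem_nbrsIn.2 ⟨hUS hwU, hvw⟩
  refine (Finset.card_le_card hsub).trans (Finset.card_biUnion_le.trans ?_)
  refine (Finset.sum_le_card_nsmul _ _ 1 fun v hv => ?_).trans (by simpa using hT)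
  obtain ⟨hvu, hv⟩ := Finset.mem_inter.1 hv
  have hd := (mem_thin.1 hv).2.1
  rw [degIn] at hd
  rw [Finset.card_erase_of_mem (mem_nbrsIn.2 ⟨hu, (mem_nbrsIn.1 hvu).2.symm⟩), hd]

theorem notMem_light_of_big {w : V} (hw : 14 ≤ G.degIn S w) : w ∉ G.light S := fun h => by
  have := (mem_light.1 h).2.1
  omega

theorem notMem_light_of_thin {w : V} (hw : w ∈ G.thin S) : w ∉ G.light S := fun h => by
  obtain ⟨z, hz⟩ := Finset.card_pos.1 (by rw [(mem_light.1 h).2.2.1]; exact one_pos)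
  obtain ⟨hz, hz14⟩ := mem_bigNbrs.1 hz
  have := (mem_thin.1 hw).2.2 z (mem_nbrsIn.2 hz)
  omega

/-- A neighbour of a light vertex is its hub or thin. -/
theorem eq_hub_or_mem_thin (hU : U ⊆ G.light S) (hx : ∀ u ∈ U, G.bigNbrs S u = {x u})
    {u w : V} (hu : u ∈ U) (hw : w ∈ S) (huw : G.Adj u w) : w = x u ∨ w ∈ G.thin S := by
  refine ((mem_light.1 (hU hu)).2.2.2 w (mem_nbrsIn.2 ⟨hw, huw⟩)).imp_left fun h => ?_
  rw [← Finset.mem_singleton, ← hx u hu]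
  exact mem_bigNbrs.2 ⟨⟨hw, huw⟩, h⟩

/-- The labels of a closed family of light vertices can be chosen simultaneously, provided that
every hub is used often. -/
theorem IsPartialLabelling.extend_light (hk : 1 ≤ k) (hD : ∀ v, G.degIn S v ≤ D)
    (hU : U ⊆ G.light S) (hx : ∀ u ∈ U, G.bigNbrs S u = {x u})
    (hclosed : ∀ u ∈ U, ∀ v ∈ G.thin S, G.Adj v u → v ∉ C ∧ G.nbrsIn S v ⊆ U)
    (hcard : ∀ u ∈ U, 24 ≤ (U.filter fun w => x w = x u).card)
    (hCS : C ⊆ S) (hCU : Disjoint C U)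
    (hf : G.IsPartialLabelling k (D + 2 * k - 1) S C f) :
    ∃ f', G.IsPartialLabelling k (D + 2 * k - 1) S (C ∪ U) f' := by
  classical
  set M := D + 2 * k - 1 with hM
  have hUS : U ⊆ S := fun u hu => (mem_light.1 (hU hu)).1
  have hCU' : ∀ v ∈ C, v ∉ U := fun v hv hv' => Finset.disjoint_left.1 hCU hv hv'
  obtain ⟨h1, h2, h3⟩ := hf
  let L : V → Finset ℤ := fun y =>
    (Finset.Icc (1 : ℤ) M \ Finset.Ioo (f y - k) (f y + k)) \ (G.nbrsIn C y).image f
  let R : {u // u ∈ U} → {u // u ∈ U} → Prop := fun u w =>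
    (u : V) ≠ w ∧ ∃ v ∈ G.thin S, G.Adj v u ∧ G.Adj v w
  have hpc : ∀ (p : V → Prop) [DecidablePred p]
      {_ : DecidablePred fun w : {u // u ∈ U} => p w},
      (Finset.univ.filter fun w : {u // u ∈ U} => p w).card = (U.filter p).card := by
    intro p _ _
    rw [← Finset.card_map (Function.Embedding.subtype _)]
    congr 1
    ext w
    simp [and_comm]
  obtain ⟨g, ⟨hgL, hginj⟩, hgR⟩ := exists_strong_colouring (R := R) (L := L)
    (part := fun u : {u // u ∈ U} => x u)
    (fun u w ⟨hne, v, hv, hvu, hvw⟩ => ⟨hne.symm, v, hv, hvw, hvu⟩)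
    (fun u h => h.1 rfl)
    (fun u => by
      refine le_trans (hpc fun w => (u : V) ≠ w ∧ ∃ v ∈ G.thin S, G.Adj v u ∧ G.Adj v w).le
        (card_thin_related_le (hUS u.2) ?_ hUS)
      have := IsCritical.card_inter_thin (hU u.2)
      have := (mem_light.1 (hU u.2)).2.1
      omega)
    (fun u => le_trans (hcard u u.2) (hpc fun w => x w = x u).ge)
    (fun u => by
      refine le_trans (b := (U.filter fun w => x w = x u).card)
        (hpc fun w => x w = x u).le ?_
      have hl : M ≤ (L (x u)).card + (2 * k - 1) + (G.nbrsIn C (x u)).card :=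
        le_card_labels hk (G.nbrsIn C (x u)) f (f (x u))
      have hdisj : Disjoint (G.nbrsIn C (x u)) (U.filter fun w => x w = x u) :=
        Finset.disjoint_left.2 fun w hw hw' =>
          hCU' w (mem_nbrsIn.1 hw).1 (Finset.mem_filter.1 hw').1
      have hsub : G.nbrsIn C (x u) ∪ (U.filter fun w => x w = x u) ⊆ G.nbrsIn S (x u) := by
        refine Finset.union_subset (Finset.filter_subset_filter _ hCS) fun w hw => ?_
        obtain ⟨hw, hwx⟩ := Finset.mem_filter.1 hw
        exact mem_nbrsIn.2 ⟨hUS hw, hwx ▸ (hub_mem hx hw).1.2.symm⟩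
      have hle := Finset.card_le_card hsub
      rw [Finset.card_union_of_disjoint hdisj] at hle
      have hdeg := hD (x u)
      rw [degIn] at hdeg
      change _ ≤ (L (x u)).card
      omega)
  have hmem : ∀ u, g u ∈ Finset.Icc (1 : ℤ) M ∧ (k : ℤ) ≤ |g u - f (x u)| ∧
      ∀ w ∈ G.nbrsIn C (x u), g u ≠ f w := by
    intro u
    have hu := hgL u
    simp only [L, Finset.mem_sdiff, Finset.mem_image, not_exists, not_and] at hu
    refine ⟨hu.1.1, ?_, fun w hw hgw => hu.2 w hw hgw.symm⟩
    have := hu.1.2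
    by_contra! hlt
    rw [abs_lt] at hlt
    rw [Finset.mem_Ioo] at this
    omega
  let f' : V → ℤ := fun v => if h : v ∈ U then g ⟨v, h⟩ else f v
  have eU : ∀ v (h : v ∈ U), f' v = g ⟨v, h⟩ := fun v h => dif_pos h
  have eC : ∀ v ∈ C, f' v = f v := fun v h => dif_neg (hCU' v h)
  have hadjUC : ∀ u ∈ U, ∀ c ∈ C, G.Adj u c → (k : ℤ) ≤ |f' u - f' c| := by
    intro u hu c hc huc
    rcases eq_hub_or_mem_thin hU hx hu (hCS hc) huc with rfl | ht
    · rw [eU u hu, eC _ hc]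
      exact (hmem ⟨u, hu⟩).2.1
    · exact absurd hc (hclosed u hu c ht huc.symm).1
  have hdistUC : ∀ u ∈ U, ∀ c ∈ C, (∃ w ∈ S, G.Adj u w ∧ G.Adj w c) → f' u ≠ f' c := by
    rintro u hu c hc ⟨w, hw, huw, hwc⟩
    rcases eq_hub_or_mem_thin hU hx hu hw huw with rfl | ht
    · rw [eU u hu, eC _ hc]
      exact (hmem ⟨u, hu⟩).2.2 c (mem_nbrsIn.2 ⟨hc, hwc⟩)
    · exact absurd ((hclosed u hu w ht huw.symm).2 (mem_nbrsIn.2 ⟨hCS hc, hwc⟩)) (hCU' c hc)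
  refine ⟨f', fun v hv => ?_, fun u hu v hv huv => ?_, fun u hu v hv huv hw => ?_⟩
  · rcases Finset.mem_union.1 hv with hv | hv
    · rw [eC v hv]
      exact h1 v hv
    · rw [eU v hv]
      exact (hmem ⟨v, hv⟩).1
  · rcases Finset.mem_union.1 hu with hu | hu <;> rcases Finset.mem_union.1 hv with hv | hv
    · rw [eC u hu, eC v hv]
      exact h2 u hu v hv huv
    · rw [abs_sub_comm]
      exact hadjUC v hv u hu huv.symm
    · exact hadjUC u hu v hv huv
    · rcases eq_hub_or_mem_thin hU hx hu (hUS hv) huv with rfl | ht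
      · exact absurd (hU hv) (notMem_light_of_big (hub_mem hx hu).2)
      · exact absurd (hU hv) (notMem_light_of_thin ht)
  · rcases Finset.mem_union.1 hu with hu | hu <;> rcases Finset.mem_union.1 hv with hv | hv
    · rw [eC u hu, eC v hv]
      exact h3 u hu v hv huv hw
    · obtain ⟨w, hw, huw, hwv⟩ := hw
      exact (hdistUC v hv u hu ⟨w, hw, hwv.symm, huw.symm⟩).symm
    · exact hdistUC u hu v hv hw
    · obtain ⟨w, hw, huw, hwv⟩ := hw
      rw [eU u hu, eU v hv]
      rcases eq_hub_or_mem_thin hU hx hu hw huw with h | ht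
      · have hwv' : w = x v := (eq_hub_or_mem_thin hU hx hv hw hwv.symm).resolve_right
          (notMem_thin_of_big w (h ▸ (hub_mem hx hu).2))
        exact fun hg => huv (congrArg Subtype.val (hginj ⟨u, hu⟩ ⟨v, hv⟩ (h.symm.trans hwv') hg))
      · exact hgR _ _ ⟨huv, w, ht, huw.symm, hwv⟩

/-- In a critical set, every closed family of light vertices has a hub which is used rarely. -/
theorem IsCritical.exists_card_hub_le (h : G.IsCritical k D S) (hU : U ⊆ G.light S)
    (hne : U.Nonempty) (hx : ∀ u ∈ U, G.bigNbrs S u = {x u})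
    (hclosed : ∀ u ∈ U, ∀ v ∈ G.thin S, G.Adj v u → G.nbrsIn S v ⊆ U) :
    ∃ u ∈ U, (U.filter fun w => x w = x u).card ≤ 23 := by
  by_contra! hcard
  set F := (G.thin S).filter fun v => ∃ u ∈ U, G.Adj v u with hF
  have hFT : F ⊆ G.thin S := Finset.filter_subset _ _
  have hFS : F ⊆ S := fun v hv => (mem_thin.1 (hFT hv)).1
  have hFN : ∀ w ∈ F, G.nbrsIn S w ⊆ U := by
    intro w hw
    obtain ⟨hw, u, hu, hwu⟩ := Finset.mem_filter.1 hw
    exact hclosed u hu w hw hwu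
  have hFU : ∀ v ∈ F, v ∉ U := fun v hv hv' => notMem_light_of_thin (hFT hv) (hU hv')
  have hFne : F.Nonempty := by
    obtain ⟨u, hu⟩ := hne
    have h2 := h.two_le_degIn (mem_light.1 (hU hu)).1
    have h3 := card_inter_thin (hU hu)
    obtain ⟨v, hv⟩ := Finset.card_pos.1 (show 0 < (G.nbrsIn S u ∩ G.thin S).card by omega)
    obtain ⟨hv, hvT⟩ := Finset.mem_inter.1 hv
    exact ⟨v, Finset.mem_filter.2 ⟨hvT, u, hu, (mem_nbrsIn.1 hv).2.symm⟩⟩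
  obtain ⟨f, hf⟩ := h.exists_of_ssubset F hFS hFne
  have hCS : (S \ F) \ U ⊆ S := Finset.sdiff_subset.trans Finset.sdiff_subset
  have hf' : G.IsPartialLabelling k (D + 2 * k - 1) S ((S \ F) \ U) f :=
    hf.restrict Finset.sdiff_subset fun w hw p hp _ _ hwp _ =>
      absurd (hFN w hw (mem_nbrsIn.2 ⟨hCS hp, hwp⟩)) (Finset.mem_sdiff.1 hp).2
  obtain ⟨f', hf''⟩ := hf'.extend_light h.one_le h.degIn_le hU hx
    (fun u hu v hv hvu => ⟨fun hvC => (Finset.mem_sdiff.1 (Finset.mem_sdiff.1 hvC).1).2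
      (Finset.mem_filter.2 ⟨hv, u, hu, hvu⟩), hclosed u hu v hv hvu⟩)
    (fun u hu => hcard u hu) hCS Finset.sdiff_disjoint
  rw [Finset.sdiff_union_of_subset fun u hu => Finset.mem_sdiff.2
    ⟨(mem_light.1 (hU hu)).1, fun hF => hFU u hF hu⟩] at hf''
  exact h.not_exists_without_thin hFT ⟨f', hf''⟩

end SimpleGraph

namespace SimpleGraph

variable {V : Type*} [DecidableEq V] (G : SimpleGraph V) [DecidableRel G.Adj]

/-- The thin vertices all of whose neighbours are in `U`. -/
def inner (S U : Finset V) : Finset V := (G.thin S).filter fun v => G.nbrsIn S v ⊆ U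

/-- Vertices of degree at least `14` send charge to all neighbours, the remaining vertices which
are neither light nor thin send charge to their thin neighbours. -/
def Sends (S : Finset V) (u v : V) : Prop :=
  14 ≤ G.degIn S u ∨ (u ∉ G.light S ∧ u ∉ G.thin S ∧ v ∈ G.thin S)

instance (S : Finset V) : DecidableRel (G.Sends S) := fun _ _ =>
  inferInstanceAs (Decidable (_ ∨ _))

variable {G} {k D : ℕ} {S U W : Finset V} {x : V → V}

theorem mem_inner {v : V} : v ∈ G.inner S U ↔ v ∈ G.thin S ∧ G.nbrsIn S v ⊆ U := by
  simp [inner]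

/-- Removing `W` from `U` destroys only inner vertices with a neighbour in `W`. -/
theorem exists_of_notMem_inner_sdiff {v : V} (hv : v ∈ G.inner S U)
    (hv' : v ∉ G.inner S (U \ W)) : ∃ w ∈ W, v ∈ G.nbrsIn S w ∩ G.thin S := by
  rw [mem_inner] at hv hv'
  have : ¬ G.nbrsIn S v ⊆ U \ W := fun h => hv' ⟨hv.1, h⟩
  obtain ⟨w, hw, hwU⟩ := Finset.not_subset.1 this
  refine ⟨w, by_contra fun hwW => hwU (Finset.mem_sdiff.2 ⟨hv.2 hw, hwW⟩), ?_⟩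
  exact Finset.mem_inter.2 ⟨mem_nbrsIn.2 ⟨(mem_thin.1 hv.1).1, (mem_nbrsIn.1 hw).2.symm⟩, hv.1⟩

namespace IsCritical

/-- There are few thin vertices between light vertices. -/
theorem four_mul_card_inner_le (h : G.IsCritical k D S)
    (hx : ∀ u ∈ G.light S, G.bigNbrs S u = {x u}) (hU : U ⊆ G.light S) :
    4 * (G.inner S U).card ≤ ∑ u ∈ U, 5 * (G.degIn S u - 2) + 92 * (U.image x).card := by
  induction U using Finset.strongInduction with
  | H U ih =>
  have hmain : ∀ W ⊆ U, W.Nonempty →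
      4 * (G.inner S (U \ W)).card + ∑ u ∈ W, 5 * (G.degIn S u - 2) ≤
        ∑ u ∈ U, 5 * (G.degIn S u - 2) + 92 * ((U \ W).image x).card := by
    intro W hW hWne
    have h1 := ih (U \ W) (Finset.sdiff_ssubset hW hWne) (Finset.sdiff_subset.trans hU)
    have h2 := Finset.sum_sdiff hW (f := fun u => 5 * (G.degIn S u - 2))
    omega
  have hdeg : ∀ u ∈ U, 2 ≤ G.degIn S u := fun u hu => h.two_le_degIn (mem_light.1 (hU hu)).1
  by_cases hclosed : ∀ u ∈ U, ∀ v ∈ G.thin S, G.Adj v u → G.nbrsIn S v ⊆ U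
  · rcases U.eq_empty_or_nonempty with rfl | hne
    · have : G.inner S ∅ = ∅ := by
        refine Finset.filter_eq_empty_iff.2 fun v hv hsub => ?_
        have h2 := (mem_thin.1 hv).2.1
        rw [degIn, Finset.subset_empty.1 hsub] at h2
        simp at h2
      simp [this]
    obtain ⟨u, hu, hcard⟩ := h.exists_card_hub_le hU hne (fun u hu => hx u (hU hu)) hclosed
    set W := U.filter fun w => x w = x u with hW
    have hWU : W ⊆ U := Finset.filter_subset _ _
    have h1 := hmain W hWU ⟨u, Finset.mem_filter.2 ⟨hu, rfl⟩⟩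
    have h2 : (G.inner S U).card ≤ (G.inner S (U \ W)).card + ∑ w ∈ W, (G.degIn S w - 1) := by
      have hsub : G.inner S U ⊆ G.inner S (U \ W) ∪
          W.biUnion fun w => G.nbrsIn S w ∩ G.thin S := by
        intro v hv
        by_cases hv' : v ∈ G.inner S (U \ W)
        · exact Finset.mem_union_left _ hv'
        · exact Finset.mem_union_right _ (Finset.mem_biUnion.2
            (exists_of_notMem_inner_sdiff hv hv'))
      refine (Finset.card_le_card hsub).trans ((Finset.card_union_le _ _).trans
        (Nat.add_le_add_left (Finset.card_biUnion_le.trans (Finset.sum_le_sum fun w hw => ?_)) _))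
      have := card_inter_thin (hU (hWU hw))
      omega
    have h3 : 4 * ∑ w ∈ W, (G.degIn S w - 1) ≤ ∑ w ∈ W, 5 * (G.degIn S w - 2) + 4 * W.card := by
      rw [Finset.mul_sum, mul_comm 4, ← smul_eq_mul W.card, ← Finset.sum_const,
        ← Finset.sum_add_distrib]
      refine Finset.sum_le_sum fun w hw => ?_
      have := hdeg w (hWU hw)
      omega
    have h4 : ((U \ W).image x).card + 1 ≤ (U.image x).card := by
      have hxu : x u ∈ U.image x := Finset.mem_image_of_mem x hu
      rw [← Finset.card_erase_add_one hxu]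
      refine Nat.succ_le_succ (Finset.card_le_card fun y hy => ?_)
      obtain ⟨w, hw, rfl⟩ := Finset.mem_image.1 hy
      obtain ⟨hwU, hwW⟩ := Finset.mem_sdiff.1 hw
      exact Finset.mem_erase.2 ⟨fun he => hwW (Finset.mem_filter.2 ⟨hwU, he⟩),
        Finset.mem_image_of_mem x hwU⟩
    omega
  · push Not at hclosed
    obtain ⟨u, hu, v, hv, hvu, hvU⟩ := hclosed
    have h1 := hmain {u} (by simpa using hu) (by simp)
    have h2 : (G.inner S U).card ≤ (G.inner S (U \ {u})).card +
        ((G.nbrsIn S u ∩ G.thin S).erase v).card := by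
      refine (Finset.card_le_card fun z hz => ?_).trans (Finset.card_union_le _ _)
      by_cases hz' : z ∈ G.inner S (U \ {u})
      · exact Finset.mem_union_left _ hz'
      · obtain ⟨w, hw, hzw⟩ := exists_of_notMem_inner_sdiff hz hz'
        rw [Finset.mem_singleton.1 hw] at hzw
        refine Finset.mem_union_right _ (Finset.mem_erase.2 ⟨?_, hzw⟩)
        rintro rfl
        exact hvU (mem_inner.1 hz).2
    have h3 : ((U \ {u}).image x).card ≤ (U.image x).card :=
      Finset.card_le_card (Finset.image_subset_image Finset.sdiff_subset)
    have h4 := card_inter_thin (hU hu)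
    rw [Finset.card_erase_of_mem (Finset.mem_inter.2
      ⟨mem_nbrsIn.2 ⟨(mem_thin.1 hv).1, hvu.symm⟩, hv⟩)] at h2
    rw [Finset.sum_singleton] at h1
    have := hdeg u hu
    omega

/-- The charge of a vertex after discharging. -/
theorem charge_ge (h : G.IsCritical k D S) {v : V} (hv : v ∈ S) :
    (if 14 ≤ G.degIn S v then (G.degIn S v : ℤ) - 14 else 0) +
      (if v ∈ G.light S then 5 * ((G.degIn S v - 2 : ℕ) : ℤ) else 0) -
      (if v ∈ G.inner S (G.light S) then 4 else 0) ≤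
    5 * (G.degIn S v : ℤ) - 14 - 4 * (((G.nbrsIn S v).filter fun w => G.Sends S v w).card : ℤ) +
      4 * (((G.nbrsIn S v).filter fun w => G.Sends S w v).card : ℤ) := by
  have hd2 := h.two_le_degIn hv
  set d := G.degIn S v with hd
  set a := ((G.nbrsIn S v).filter fun w => G.Sends S v w).card with ha
  set b := ((G.nbrsIn S v).filter fun w => G.Sends S w v).card with hb
  have hbig : (G.bigNbrs S v).card ≤ b :=
    Finset.card_le_card (Finset.monotone_filter_right _ fun w _ hw => Or.inl hw)
  by_cases h14 : 14 ≤ d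
  · have had : a ≤ d := Finset.card_le_card (Finset.filter_subset _ _)
    rw [if_pos h14, if_neg (notMem_light_of_big h14),
      if_neg fun hi => notMem_thin_of_big v h14 (mem_inner.1 hi).1]
    omega
  rw [if_neg h14]
  by_cases hT : v ∈ G.thin S
  · have ha0 : a = 0 := by
      rw [ha, Finset.card_eq_zero, Finset.filter_eq_empty_iff]
      rintro w - (hs | hs)
      exacts [h14 hs, hs.2.1 hT]
    have hd2' : d = 2 := (mem_thin.1 hT).2.1
    rw [if_neg (notMem_light_of_thin hT)]
    split_ifs with hi
    · omega
    · have hb0 : 0 < b := by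
        have : ¬ G.nbrsIn S v ⊆ G.light S := fun hs => hi (mem_inner.2 ⟨hT, hs⟩)
        obtain ⟨w, hw, hwL⟩ := Finset.not_subset.1 this
        refine Finset.card_pos.2 ⟨w, Finset.mem_filter.2 ⟨hw, Or.inr ⟨hwL, fun hwT => ?_, hT⟩⟩⟩
        exact h.not_adj_thin hT hwT (mem_nbrsIn.1 hw).2
      omega
  rw [if_neg fun hi => hT (mem_inner.1 hi).1]
  by_cases hL : v ∈ G.light S
  · have ha0 : a = 0 := by
      rw [ha, Finset.card_eq_zero, Finset.filter_eq_empty_iff]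
      rintro w - (hs | hs)
      exacts [h14 hs, hs.1 hL]
    rw [if_pos hL]
    rw [(mem_light.1 hL).2.2.1] at hbig
    omega
  rw [if_neg hL]
  set j := (G.nbrsIn S v ∩ G.thin S).card with hj
  set c := (G.bigNbrs S v).card with hc
  have haj : a ≤ j := by
    refine Finset.card_le_card fun w hw => ?_
    obtain ⟨hw, hs | hs⟩ := Finset.mem_filter.1 hw
    exacts [absurd hs h14, Finset.mem_inter.2 ⟨hw, hs.2.2⟩]
  have hbigsub : G.bigNbrs S v ⊆ G.nbrsIn S v \ G.thin S := fun w hw => by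
    obtain ⟨hw, hw14⟩ := mem_bigNbrs.1 hw
    exact Finset.mem_sdiff.2 ⟨mem_nbrsIn.2 hw, notMem_thin_of_big w hw14⟩
  have hsplit : (G.nbrsIn S v \ G.thin S).card + j = d :=
    Finset.card_sdiff_add_card_inter (G.nbrsIn S v) (G.thin S)
  have hcle : c ≤ (G.nbrsIn S v \ G.thin S).card := Finset.card_le_card hbigsub
  rcases Nat.eq_zero_or_pos c with hc0 | hc0
  · have hempty : G.bigNbrs S v = ∅ := Finset.card_eq_zero.1 hc0
    rcases Nat.eq_zero_or_pos j with hj0 | hj0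
    · have hd3 : d ≠ 2 := fun hd2' => hT (mem_thin.2 ⟨hv, hd2', fun w hw => by
        by_contra! hw14
        have : w ∈ G.bigNbrs S v := mem_bigNbrs.2 ⟨mem_nbrsIn.1 hw, hw14⟩
        simp [hempty] at this⟩)
      omega
    · have := h.three_le_card_not_thin hv (by omega) hempty (Finset.card_pos.1 hj0)
      omega
  · by_cases hc1 : c = 1 ∧ (G.nbrsIn S v \ G.thin S).card = 1
    · have hd6 : 6 ≤ d := by
        by_contra! hd6
        refine hL (mem_light.2 ⟨hv, by omega, hc1.1, fun w hw => ?_⟩)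
        by_cases hwT : w ∈ G.thin S
        · exact Or.inr hwT
        · have heq := Finset.eq_of_subset_of_card_le hbigsub (by omega)
          have hw' : w ∈ G.nbrsIn S v \ G.thin S := Finset.mem_sdiff.2 ⟨hw, hwT⟩
          rw [← heq] at hw'
          exact Or.inl (mem_bigNbrs.1 hw').2
      omega
    · omega

/-- A critical set is not sparse. -/
theorem le_sum_degIn (h : G.IsCritical k D S) : 14 * S.card ≤ 5 * ∑ v ∈ S, G.degIn S v := by
  have hex : ∀ u, ∃ y, u ∈ G.light S → G.bigNbrs S u = {y} := by
    intro u
    by_cases hu : u ∈ G.light S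
    · obtain ⟨y, hy⟩ := Finset.card_eq_one.1 (mem_light.1 hu).2.2.1
      exact ⟨y, fun _ => hy⟩
    · exact ⟨u, fun hu' => absurd hu' hu⟩
  choose x hx using hex
  have hinner := h.four_mul_card_inner_le (x := x) (fun u hu => hx u hu) subset_rfl
  have hcharge := Finset.sum_le_sum fun v hv => h.charge_ge (v := v) hv
  have hswap : ∑ v ∈ S, (((G.nbrsIn S v).filter fun w => G.Sends S v w).card : ℤ) =
      ∑ v ∈ S, (((G.nbrsIn S v).filter fun w => G.Sends S w v).card : ℤ) := by
    simp only [nbrsIn, Finset.filter_filter, Finset.card_filter, Nat.cast_sum]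
    rw [Finset.sum_comm]
    simp only [G.adj_comm]
  have hlight : S.filter (· ∈ G.light S) = G.light S :=
    Finset.filter_mem_eq_inter.trans (Finset.inter_eq_right.2 (Finset.filter_subset _ _))
  have hin : S.filter (· ∈ G.inner S (G.light S)) = G.inner S (G.light S) :=
    Finset.filter_mem_eq_inter.trans (Finset.inter_eq_right.2
      ((Finset.filter_subset _ _).trans (Finset.filter_subset _ _)))
  have hbig : 92 * (((G.light S).image x).card : ℤ) ≤
      ∑ v ∈ S, if 14 ≤ G.degIn S v then (G.degIn S v : ℤ) - 14 else 0 := by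
    rw [mul_comm, ← nsmul_eq_mul]
    refine (Finset.card_nsmul_le_sum _ (fun v => if 14 ≤ G.degIn S v then
      (G.degIn S v : ℤ) - 14 else 0) _ fun y hy => ?_).trans
      (Finset.sum_le_sum_of_subset_of_nonneg (fun y hy => ?_) fun v _ _ => ?_)
    · obtain ⟨u, hu, rfl⟩ := Finset.mem_image.1 hy
      have h1 := h.le_degIn_of_light hu (hx u hu ▸ Finset.mem_singleton_self _)
      have := h.le_bound
      rw [if_pos (by omega)]
      omega
    · obtain ⟨u, hu, rfl⟩ := Finset.mem_image.1 hy
      exact (hub_mem (fun u hu => hx u hu) hu).1.1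
    · split_ifs <;> omega
  rw [Finset.sum_sub_distrib, Finset.sum_add_distrib, Finset.sum_add_distrib,
    Finset.sum_sub_distrib, Finset.sum_sub_distrib, ← Finset.mul_sum, ← Finset.mul_sum,
    ← Finset.mul_sum, hswap, ← Finset.sum_filter, ← Finset.sum_filter, ← Finset.sum_filter,
    hlight, hin, Finset.sum_const, Finset.sum_const] at hcharge
  rw [← Finset.sum_filter] at hbig
  zify at hinner ⊢
  push_cast at hcharge hinner ⊢
  simp only [nsmul_eq_mul] at hcharge
  linarith

end IsCritical

end SimpleGraph

namespace SimpleGraph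

variable {V : Type*} [DecidableEq V] {G : SimpleGraph V} [DecidableRel G.Adj]

/-- In a planar graph of girth at least seven, every set of vertices with degrees at most `D` has
a labelling. -/
theorem IsPlanar.exists_partialLabelling {k D : ℕ} (hG : G.IsPlanar)
    (hgirth : (7 : ℕ∞) ≤ G.egirth) (hk : 1 ≤ k) (hD : 190 + 2 * k ≤ D) (S : Finset V)
    (hdeg : ∀ v, G.degIn S v ≤ D) : ∃ f, G.IsPartialLabelling k (D + 2 * k - 1) S S f := by
  induction S using Finset.strongInduction with
  | H S ih =>
  by_contra hno
  have hcrit : G.IsCritical k D S := by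
    refine ⟨hk, hD, hdeg, fun F hF hne => ih _ (Finset.sdiff_ssubset hF hne) fun v => ?_, hno⟩
    exact (Finset.card_le_card (Finset.filter_subset_filter _ Finset.sdiff_subset)).trans (hdeg v)
  have hS : S.Nonempty := by
    rw [Finset.nonempty_iff_ne_empty]
    rintro rfl
    exact hno ⟨0, by simp [IsPartialLabelling]⟩
  exact absurd (hG.five_mul_sum_degree_lt hgirth hS) (not_lt.2 hcrit.le_sum_degIn)

end SimpleGraph

/-- Dvořák et al.: for a planar graph `G` of girth at least `7` with `Δ(G) ≥ 190 + 2k`,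
`λ_{k,1}(G) ≤ Δ(G) + 2k - 1`. -/
theorem lambdaNumber_girth_seven {V : Type*} [Fintype V] (G : SimpleGraph V)
    [DecidableRel G.Adj] (hG : G.IsPlanar) (k : ℕ) (hk : 1 ≤ k)
    (hgirth : (7 : ℕ∞) ≤ G.egirth) (hΔ : 190 + 2 * k ≤ G.maxDegree) :
    G.lambdaNumber k 1 ≤ G.maxDegree + 2 * k - 1 := by
  classical
  have hdeg : ∀ v, G.degIn Finset.univ v ≤ G.maxDegree := by
    intro v
    refine le_trans (le_of_eq ?_) (G.degree_le_maxDegree v)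
    rw [degIn, nbrsIn, ← card_neighborFinset_eq_degree, neighborFinset_eq_filter]
  obtain ⟨f, hrange, hadj, hdist⟩ :=
    hG.exists_partialLabelling hgirth hk hΔ Finset.univ hdeg
  refine Nat.sInf_le ⟨f, ⟨fun u v huv => hadj u (Finset.mem_univ u) v (Finset.mem_univ v) huv,
    fun u v huv _ hw => ?_⟩, fun v => hrange v (Finset.mem_univ v)⟩
  obtain ⟨w, huw, hwv⟩ := hw
  have := hdist u (Finset.mem_univ u) v (Finset.mem_univ v) huv
    ⟨w, Finset.mem_univ w, huw, hwv⟩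
  exact Int.one_le_abs (sub_ne_zero.2 this)
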